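/- Let β ∈ {0,1}, d ≥ 1, λ ∈ 2^ℤ, and for t > 0 and x ∈ ℝ^d define the oscillatory integral I_λ(x, t) = λ^d ∫_{ℝ^d} e^{i λ x·ξ + i t m_β(λ|ξ|)} ρ(|ξ|) dξ. Then sup_{x ∈ ℝ^d} |I_λ(x, t)| ≲ c_{β,d}(λ) t^{-d/2} for all t > 0, where c_{β,d}(λ) = λ^{d/2-1} ⟨√β λ⟩^{-d/2} ⟨λ⟩^{d/4+1} and the implicit constant is independent of λ, x and t. -/

import Mathlib

noncomputable section

open MeasureTheory Complex Real
open scoped FourierTransform ENNReal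

/-- Euclidean space `ℝ^d`. -/
abbrev Euc (d : ℕ) := EuclideanSpace ℝ (Fin d)

/-- Japanese bracket `⟨x⟩ = (1+|x|²)^{1/2}`. -/
def jap (x : ℝ) : ℝ := Real.sqrt (1 + x ^ 2)

/-- The symbol `m_β(r) = √(r(1+βr²)tanh r)`. -/
def mSymb (β r : ℝ) : ℝ := Real.sqrt (r * (1 + β * r ^ 2) * Real.tanh r)

/-- The constant `c_{β,d}(λ) = λ^{d/2-1}⟨√β λ⟩^{-d/2}⟨λ⟩^{d/4+1}`. -/
def cFactor (β : ℝ) (d : ℕ) (lam : ℝ) : ℝ :=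
  lam ^ ((d : ℝ) / 2 - 1) * jap (Real.sqrt β * lam) ^ (-(d : ℝ) / 2) *
    jap lam ^ ((d : ℝ) / 4 + 1)

/-- `χ ∈ C_0^∞(ℝ)`, `0 ≤ χ ≤ 1`, `χ ≡ 1` on `[-1,1]`, `supp χ ⊆ [-2,2]`. -/
def IsCutoff (χ : ℝ → ℝ) : Prop :=
  ContDiff ℝ (⊤ : ℕ∞) χ ∧ HasCompactSupport χ ∧ (∀ s, 0 ≤ χ s ∧ χ s ≤ 1) ∧
    (∀ s ∈ Set.Icc (-1 : ℝ) 1, χ s = 1) ∧ Function.support χ ⊆ Set.Icc (-2 : ℝ) 2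

/-- `ρ(s) = χ(s) - χ(2s)`. -/
def rho (χ : ℝ → ℝ) (s : ℝ) : ℝ := χ s - χ (2 * s)

/-- Fourier multiplier operator with symbol `m`. -/
def mulOp {d : ℕ} (m : Euc d → ℂ) (f : Euc d → ℂ) : Euc d → ℂ :=
  𝓕⁻ fun ξ => m ξ * 𝓕 f ξ

/-- The Littlewood–Paley type projection `P_λ` with multiplier `ρ(|ξ|/λ)`. -/
def proj {d : ℕ} (χ : ℝ → ℝ) (lam : ℝ) (f : Euc d → ℂ) : Euc d → ℂ :=
  mulOp (fun ξ => (rho χ (‖ξ‖ / lam) : ℂ)) f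

/-- The propagator `S_{m_β}(t) = exp(-it m_β(D))`, so that `S_{m_β}(±t) = prop β (±t)`. -/
def propg (β : ℝ) {d : ℕ} (t : ℝ) (f : Euc d → ℂ) : Euc d → ℂ :=
  mulOp (fun ξ => Complex.exp (-Complex.I * (t * mSymb β ‖ξ‖))) f

open scoped RealInnerProductSpace

/-! ### Van der Corput estimates -/

theorem norm_exp_I_mul_real (y : ℝ) : ‖Complex.exp (Complex.I * (y : ℂ))‖ = 1 := by
  rw [mul_comm]; exact Complex.norm_exp_ofReal_mul_I y

theorem hasDerivAt_exp_I_mul {φ : ℝ → ℝ} {φ' r : ℝ} (h : HasDerivAt φ φ' r) :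
    HasDerivAt (fun r => Complex.exp (Complex.I * (φ r : ℂ)))
      (Complex.exp (Complex.I * (φ r : ℂ)) * (Complex.I * (φ' : ℂ))) r :=
  (h.ofReal_comp.const_mul Complex.I).cexp

theorem abs_div_sq_add_le {y μ : ℝ} (hμ : 0 < μ) : |y / (y ^ 2 + μ)| ≤ 1 / (2 * √μ) := by
  have h1 : 0 < √μ := Real.sqrt_pos.2 hμ
  have h2 : √μ ^ 2 = μ := Real.sq_sqrt hμ.le
  have h3 : 0 < y ^ 2 + μ := by positivity
  rw [abs_div, abs_of_pos h3, div_le_div_iff₀ h3 (by positivity)]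
  nlinarith [sq_nonneg (|y| - √μ), sq_abs y]

/-- A van der Corput type estimate, obtained by integrating by parts against the regularised
multiplier `φ' / (φ' ^ 2 + μ)`. -/
theorem norm_integral_exp_mul_le {φ φ' φ'' : ℝ → ℝ} {A A' : ℝ → ℂ} {a b μ : ℝ} (hab : a ≤ b)
    (hμ : 0 < μ)
    (hφ : ∀ r ∈ Set.Icc a b, HasDerivAt φ (φ' r) r)
    (hφ' : ∀ r ∈ Set.Icc a b, HasDerivAt φ' (φ'' r) r)
    (hφ'' : ContinuousOn φ'' (Set.Icc a b))
    (hA : ∀ r ∈ Set.Icc a b, HasDerivAt A (A' r) r)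
    (hA' : ContinuousOn A' (Set.Icc a b)) :
    ‖∫ r in a..b, Complex.exp (Complex.I * (φ r : ℂ)) * A r‖ ≤
      (‖A a‖ + ‖A b‖) / (2 * √μ) +
        (∫ r in a..b, (μ + |φ'' r|) / (φ' r ^ 2 + μ) * ‖A r‖) +
        (∫ r in a..b, ‖A' r‖) / (2 * √μ) := by
  have hu : Set.uIcc a b = Set.Icc a b := Set.uIcc_of_le hab
  have cφ : ContinuousOn φ (Set.Icc a b) := fun r hr => (hφ r hr).continuousAt.continuousWithinAt
  have cφ' : ContinuousOn φ' (Set.Icc a b) :=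
    fun r hr => (hφ' r hr).continuousAt.continuousWithinAt
  have cA : ContinuousOn A (Set.Icc a b) := fun r hr => (hA r hr).continuousAt.continuousWithinAt
  have hpos : ∀ r, 0 < φ' r ^ 2 + μ := fun r => by positivity
  have hne : ∀ r, φ' r ^ 2 + μ ≠ 0 := fun r => (hpos r).ne'
  set e : ℝ → ℂ := fun r => Complex.exp (Complex.I * (φ r : ℂ)) with he
  have ce : ContinuousOn e (Set.Icc a b) := by
    apply Continuous.comp_continuousOn Complex.continuous_exp
    exact continuousOn_const.mul (Complex.continuous_ofReal.comp_continuousOn cφ)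
  set q : ℝ → ℝ := fun r => φ' r / (φ' r ^ 2 + μ) with hq
  set q' : ℝ → ℝ := fun r => φ'' r * (μ - φ' r ^ 2) / (φ' r ^ 2 + μ) ^ 2 with hq'
  have cq : ContinuousOn q (Set.Icc a b) :=
    cφ'.div ((cφ'.pow 2).add continuousOn_const) fun r _ => hne r
  have cq' : ContinuousOn q' (Set.Icc a b) :=
    (hφ''.mul (continuousOn_const.sub (cφ'.pow 2))).div
      (((cφ'.pow 2).add continuousOn_const).pow 2) fun r _ => pow_ne_zero 2 (hne r)
  have dq : ∀ r ∈ Set.Icc a b, HasDerivAt q (q' r) r := by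
    intro r hr
    have := (hφ' r hr).div (((hφ' r hr).pow 2).add_const μ) (hne r)
    refine this.congr_deriv ?_
    simp only [hq']
    congr 1
    simp
    ring
  have dQ : ∀ r ∈ Set.Icc a b, HasDerivAt (fun r => e r * ((q r : ℂ) * A r))
      (e r * (Complex.I * φ' r) * (q r * A r) + e r * (q' r * A r + q r * A' r)) r := by
    intro r hr
    exact (hasDerivAt_exp_I_mul (hφ r hr)).mul (((dq r hr).ofReal_comp).mul (hA r hr))
  have cc : ∀ {f : ℝ → ℝ}, ContinuousOn f (Set.Icc a b) →
      ContinuousOn (fun r => (f r : ℂ)) (Set.Icc a b) :=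
    fun hf => Complex.continuous_ofReal.comp_continuousOn hf
  have cQ' : ContinuousOn (fun r => e r * (Complex.I * φ' r) * (q r * A r) +
      e r * (q' r * A r + q r * A' r)) (Set.Icc a b) :=
    ((ce.mul (continuousOn_const.mul (cc cφ'))).mul ((cc cq).mul cA)).add
      (ce.mul (((cc cq').mul cA).add ((cc cq).mul hA')))
  have FTC := intervalIntegral.integral_eq_sub_of_hasDerivAt (a := a) (b := b)
    (by rw [hu]; exact dQ) (by apply ContinuousOn.intervalIntegrable; rwa [hu])
  set R : ℝ → ℂ := fun r => Complex.I * (e r * (q' r * A r + q r * A' r)) +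
      ((μ / (φ' r ^ 2 + μ) : ℝ) : ℂ) * (e r * A r) with hR
  have cR : ContinuousOn R (Set.Icc a b) :=
    (continuousOn_const.mul (ce.mul (((cc cq').mul cA).add ((cc cq).mul hA')))).add
      ((cc (continuousOn_const.div ((cφ'.pow 2).add continuousOn_const) fun r _ => hne r)).mul
        (ce.mul cA))
  have key : (∫ r in a..b, e r * A r) =
      -Complex.I * (e b * (q b * A b) - e a * (q a * A a)) + ∫ r in a..b, R r := by
    rw [← FTC, ← intervalIntegral.integral_const_mul, ← intervalIntegral.integral_add]
    · apply intervalIntegral.integral_congr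
      intro r hr
      simp only [hR, hq]
      have h1 : ((φ' r : ℂ) ^ 2 + μ) ≠ 0 := by exact_mod_cast hne r
      push_cast
      field_simp
      ring_nf
      simp only [Complex.I_sq]
      ring
    · apply ContinuousOn.intervalIntegrable; rw [hu]; exact continuousOn_const.mul cQ'
    · apply ContinuousOn.intervalIntegrable; rw [hu]; exact cR
  have ne : ∀ r, ‖e r‖ = 1 := fun r => norm_exp_I_mul_real _
  have nq : ∀ r, ‖(q r : ℂ)‖ ≤ 1 / (2 * √μ) := fun r => by
    rw [Complex.norm_real]; exact abs_div_sq_add_le hμ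
  have cw : ContinuousOn (fun r => (μ + |φ'' r|) / (φ' r ^ 2 + μ) * ‖A r‖) (Set.Icc a b) :=
    ((continuousOn_const.add hφ''.abs).div ((cφ'.pow 2).add continuousOn_const)
      fun r _ => hne r).mul cA.norm
  have iw : IntervalIntegrable (fun r => (μ + |φ'' r|) / (φ' r ^ 2 + μ) * ‖A r‖) volume a b := by
    apply ContinuousOn.intervalIntegrable; rwa [hu]
  have iA' : IntervalIntegrable (fun r => ‖A' r‖ / (2 * √μ)) volume a b := by
    apply ContinuousOn.intervalIntegrable; rw [hu]; exact hA'.norm.div_const _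
  have bR : ‖∫ r in a..b, R r‖ ≤ (∫ r in a..b, (μ + |φ'' r|) / (φ' r ^ 2 + μ) * ‖A r‖) +
        (∫ r in a..b, ‖A' r‖) / (2 * √μ) := by
    rw [← intervalIntegral.integral_div, ← intervalIntegral.integral_add iw iA']
    apply intervalIntegral.norm_integral_le_of_norm_le hab _ (iw.add iA')
    filter_upwards with r hr
    have hq'b : ‖(q' r : ℂ)‖ ≤ |φ'' r| / (φ' r ^ 2 + μ) := by
      rw [Complex.norm_real, Real.norm_eq_abs, hq', abs_div, abs_mul, abs_of_pos (pow_pos (hpos r) 2),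
        div_le_div_iff₀ (pow_pos (hpos r) 2) (hpos r), sq (φ' r ^ 2 + μ), ← mul_assoc]
      apply mul_le_mul_of_nonneg_right _ (hpos r).le
      apply mul_le_mul_of_nonneg_left _ (abs_nonneg _)
      rw [abs_le]; constructor <;> nlinarith [sq_nonneg (φ' r)]
    calc ‖R r‖ ≤ (‖(q' r : ℂ)‖ * ‖A r‖ + ‖(q r : ℂ)‖ * ‖A' r‖) + μ / (φ' r ^ 2 + μ) * ‖A r‖ := by
          simp only [hR]
          refine (norm_add_le _ _).trans (add_le_add ?_ ?_)
          · rw [norm_mul, norm_mul, ne, Complex.norm_I, one_mul, one_mul]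
            refine (norm_add_le _ _).trans ?_
            rw [norm_mul, norm_mul]
          · rw [norm_mul, norm_mul, ne, one_mul, Complex.norm_real, Real.norm_eq_abs, abs_of_pos (div_pos hμ (hpos r))]
      _ ≤ (|φ'' r| / (φ' r ^ 2 + μ) * ‖A r‖ + 1 / (2 * √μ) * ‖A' r‖) +
            μ / (φ' r ^ 2 + μ) * ‖A r‖ := by
          have := nq r
          gcongr
      _ = _ := by ring
  rw [key]
  refine (norm_add_le _ _).trans ?_
  rw [add_assoc]
  refine add_le_add ?_ bR
  rw [norm_mul, norm_neg, Complex.norm_I, one_mul]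
  refine (norm_sub_le _ _).trans ?_
  rw [norm_mul, norm_mul, norm_mul, norm_mul, ne, ne]
  have h1 := mul_le_mul_of_nonneg_right (nq a) (norm_nonneg (A a))
  have h2 := mul_le_mul_of_nonneg_right (nq b) (norm_nonneg (A b))
  calc _ ≤ 1 / (2 * √μ) * ‖A b‖ + 1 / (2 * √μ) * ‖A a‖ := by linarith
    _ = _ := by ring

/-- Second derivative test with a compactly supported amplitude. -/
theorem norm_integral_exp_mul_le_of_deriv2 {φ φ' φ'' : ℝ → ℝ} {A A' : ℝ → ℂ} {a b μ ε M : ℝ}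
    (hab : a ≤ b) (hμ : 0 < μ) (hε : |ε| = 1)
    (hφ : ∀ r ∈ Set.Icc a b, HasDerivAt φ (φ' r) r)
    (hφ' : ∀ r ∈ Set.Icc a b, HasDerivAt φ' (φ'' r) r)
    (hφ'' : ContinuousOn φ'' (Set.Icc a b)) (hlow : ∀ r ∈ Set.Icc a b, μ ≤ ε * φ'' r)
    (hA : ∀ r ∈ Set.Icc a b, HasDerivAt A (A' r) r)
    (hA' : ContinuousOn A' (Set.Icc a b)) (hAM : ∀ r ∈ Set.Icc a b, ‖A r‖ ≤ M)
    (hAM' : ∀ r ∈ Set.Icc a b, ‖A' r‖ ≤ M) (hAa : A a = 0) (hAb : A b = 0) :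
    ‖∫ r in a..b, Complex.exp (Complex.I * (φ r : ℂ)) * A r‖ ≤
      M * (2 * π + (b - a) / 2) / √μ := by
  have hu : Set.uIcc a b = Set.Icc a b := Set.uIcc_of_le hab
  have hM : 0 ≤ M := (norm_nonneg _).trans (hAM a ⟨le_rfl, hab⟩)
  have hs : 0 < √μ := Real.sqrt_pos.2 hμ
  have hs2 : √μ ^ 2 = μ := Real.sq_sqrt hμ.le
  have cφ' : ContinuousOn φ' (Set.Icc a b) :=
    fun r hr => (hφ' r hr).continuousAt.continuousWithinAt
  have cA : ContinuousOn A (Set.Icc a b) := fun r hr => (hA r hr).continuousAt.continuousWithinAt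
  have hpos : ∀ r, 0 < φ' r ^ 2 + μ := fun r => by positivity
  have hne : ∀ r, φ' r ^ 2 + μ ≠ 0 := fun r => (hpos r).ne'
  refine (norm_integral_exp_mul_le hab hμ hφ hφ' hφ'' hA hA').trans ?_
  have e1 : (∫ r in a..b, ‖A' r‖) ≤ M * (b - a) := by
    have := intervalIntegral.integral_mono_on hab
      (f := fun r => ‖A' r‖) (g := fun _ => M) (μ := volume) (by
        apply ContinuousOn.intervalIntegrable; rw [hu]; exact hA'.norm) intervalIntegrable_const hAM'
    rw [intervalIntegral.integral_const, smul_eq_mul] at this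
    linarith
  have cD : ContinuousOn (fun r => φ'' r / (φ' r ^ 2 + μ)) (Set.Icc a b) :=
    hφ''.div ((cφ'.pow 2).add continuousOn_const) fun r _ => hne r
  have e2 : (∫ r in a..b, φ'' r / (φ' r ^ 2 + μ)) =
      (Real.arctan (φ' b / √μ) - Real.arctan (φ' a / √μ)) / √μ := by
    rw [sub_div]
    apply intervalIntegral.integral_eq_sub_of_hasDerivAt
      (f := fun r => Real.arctan (φ' r / √μ) / √μ)
    · intro r hr
      rw [hu] at hr
      have := (((hφ' r hr).div_const (√μ)).arctan).div_const (√μ)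
      refine this.congr_deriv ?_
      have h1 := hne r
      have h2 : 1 + (φ' r / √μ) ^ 2 = (φ' r ^ 2 + μ) / μ := by
        rw [div_pow, hs2]; field_simp; ring
      rw [h2]
      field_simp
      rw [hs2, mul_comm]
    · apply ContinuousOn.intervalIntegrable; rw [hu]; exact cD
  have e3 : (∫ r in a..b, (μ + |φ'' r|) / (φ' r ^ 2 + μ) * ‖A r‖) ≤ 2 * M * (π / √μ) := by
    have h1 : (∫ r in a..b, (μ + |φ'' r|) / (φ' r ^ 2 + μ) * ‖A r‖) ≤
        ∫ r in a..b, (2 * M * ε) * (φ'' r / (φ' r ^ 2 + μ)) := by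
      apply intervalIntegral.integral_mono_on hab
      · apply ContinuousOn.intervalIntegrable; rw [hu]
        exact ((continuousOn_const.add hφ''.abs).div ((cφ'.pow 2).add continuousOn_const)
          fun r _ => hne r).mul cA.norm
      · apply ContinuousOn.intervalIntegrable; rw [hu]
        exact continuousOn_const.mul cD
      · intro r hr
        have h2 : |φ'' r| = ε * φ'' r := by
          have : |ε * φ'' r| = |φ'' r| := by rw [abs_mul, hε, one_mul]
          rw [← this, abs_of_pos (hμ.trans_le (hlow r hr))]
        have h3 := hlow r hr
        have h4 := hAM r hr
        rw [h2]
        calc (μ + ε * φ'' r) / (φ' r ^ 2 + μ) * ‖A r‖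
            ≤ (ε * φ'' r + ε * φ'' r) / (φ' r ^ 2 + μ) * M := by
              have := hpos r
              have h5 : 0 ≤ ε * φ'' r := hμ.le.trans h3
              gcongr
          _ = _ := by ring
    refine h1.trans ?_
    rw [intervalIntegral.integral_const_mul, e2]
    have h5 := Real.arctan_lt_pi_div_two (φ' b / √μ)
    have h6 := Real.arctan_lt_pi_div_two (φ' a / √μ)
    have h7 := Real.neg_pi_div_two_lt_arctan (φ' b / √μ)
    have h8 := Real.neg_pi_div_two_lt_arctan (φ' a / √μ)
    rw [mul_assoc]
    apply mul_le_mul_of_nonneg_left _ (by positivity)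
    rw [mul_div_assoc']
    apply div_le_div_of_nonneg_right _ hs.le
    refine (le_abs_self _).trans ?_
    rw [abs_mul, hε, one_mul, abs_le]
    constructor <;> linarith
  rw [hAa, hAb, norm_zero, add_zero, zero_div, zero_add]
  calc _ ≤ 2 * M * (π / √μ) + M * (b - a) / (2 * √μ) := by gcongr
    _ = _ := by field_simp

/-- Half-power decay for the phase `s (cos θ - 1)` on `[0, π]`. -/
theorem norm_integral_exp_cos_le {k k' : ℝ → ℝ} {M s : ℝ} (hs : s ≠ 0)
    (hk : ∀ r, HasDerivAt k (k' r) r) (hk' : Continuous k')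
    (hkM : ∀ r ∈ Set.Icc 0 π, |k r| ≤ M) (hkM' : ∀ r ∈ Set.Icc 0 π, |k' r| ≤ M) :
    ‖∫ θ in (0 : ℝ)..π, Complex.exp (Complex.I * ((s * (Real.cos θ - 1) : ℝ) : ℂ)) *
      ((k θ : ℝ) : ℂ)‖ ≤ M * (1 + π ^ 2 + π / 2) / √|s| := by
  have hs' : 0 < |s| := abs_pos.2 hs
  have hq : 0 < √|s| := Real.sqrt_pos.2 hs'
  have hq2 : √|s| ^ 2 = |s| := Real.sq_sqrt hs'.le
  have hπ := Real.pi_pos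
  have h0 : (0 : ℝ) ∈ Set.Icc 0 π := ⟨le_rfl, hπ.le⟩
  have h1 : π ∈ Set.Icc 0 π := ⟨hπ.le, le_rfl⟩
  have hM : 0 ≤ M := (abs_nonneg _).trans (hkM 0 h0)
  have ck : Continuous k := continuous_iff_continuousAt.2 fun r => (hk r).continuousAt
  have main := norm_integral_exp_mul_le (φ := fun θ => s * (Real.cos θ - 1))
    (φ' := fun θ => s * (-Real.sin θ)) (φ'' := fun θ => s * (-Real.cos θ))
    (A := fun θ => (k θ : ℂ)) (A' := fun θ => (k' θ : ℂ)) hπ.le hs'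
    (fun r _ => ((Real.hasDerivAt_cos r).sub_const 1).const_mul s)
    (fun r _ => ((Real.hasDerivAt_sin r).neg).const_mul s)
    (by fun_prop) (fun r _ => (hk r).ofReal_comp) (by fun_prop)
  refine main.trans ?_
  simp only [Complex.norm_real, Real.norm_eq_abs]
  have e1 : (∫ r in (0 : ℝ)..π, |k' r|) ≤ M * π := by
    have := intervalIntegral.integral_mono_on hπ.le
      (f := fun r => |k' r|) (g := fun _ => M) (μ := volume)
      (hk'.abs.intervalIntegrable _ _) intervalIntegrable_const hkM'
    rw [intervalIntegral.integral_const, smul_eq_mul] at this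
    linarith
  set w : ℝ → ℝ := fun u => (1 + u ^ 2)⁻¹ with hw
  set α : ℝ := √|s| * (2 / π) with hα
  have hα0 : 0 < α := by positivity
  have cw : Continuous w := by
    apply Continuous.inv₀ (by fun_prop)
    intro u; positivity
  have pw : ∀ u, 0 < w u := fun u => by simp only [hw]; positivity
  have W1 : (∫ θ in (0 : ℝ)..π, w (α * θ)) ≤ π / 2 / α := by
    rw [intervalIntegral.integral_comp_mul_left w hα0.ne', smul_eq_mul, mul_zero]
    simp only [hw, integral_inv_one_add_sq, Real.arctan_zero, sub_zero]
    rw [inv_mul_eq_div]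
    apply div_le_div_of_nonneg_right (Real.arctan_lt_pi_div_two _).le hα0.le
  have W2 : (∫ θ in (0 : ℝ)..π, w (α * (π - θ))) = ∫ θ in (0 : ℝ)..π, w (α * θ) := by
    rw [intervalIntegral.integral_comp_sub_left (fun θ => w (α * θ)) π]; simp
  have pt : ∀ θ ∈ Set.Icc 0 π, (|s| + |s * (-Real.cos θ)|) / ((s * (-Real.sin θ)) ^ 2 + |s|) * |k θ|
      ≤ 2 * M * (w (α * θ) + w (α * (π - θ))) := by
    intro θ hθ
    have b1 : (|s| + |s * (-Real.cos θ)|) / ((s * (-Real.sin θ)) ^ 2 + |s|) ≤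
        2 * (1 + |s| * Real.sin θ ^ 2)⁻¹ := by
      rw [← div_eq_mul_inv, div_le_div_iff₀ (by positivity) (by positivity), mul_pow, neg_sq,
        ← sq_abs s, abs_mul, abs_neg]
      have := Real.abs_cos_le_one θ
      have h5 : 0 ≤ |s| * Real.sin θ ^ 2 := by positivity
      have h6 : |s| + |s| * |Real.cos θ| ≤ 2 * |s| := by nlinarith
      nlinarith [mul_le_mul_of_nonneg_right h6 (by positivity : 0 ≤ 1 + |s| * Real.sin θ ^ 2)]
    have b2 : (1 + |s| * Real.sin θ ^ 2)⁻¹ ≤ w (α * θ) + w (α * (π - θ)) := by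
      have gen : ∀ u, 0 ≤ u → u ≤ π / 2 → (1 + |s| * Real.sin u ^ 2)⁻¹ ≤ w (α * u) := by
        intro u hu0 hu1
        have := Real.mul_le_sin hu0 hu1
        have h2 : (2 / π * u) ^ 2 ≤ Real.sin u ^ 2 := by gcongr
        simp only [hw, hα]
        apply inv_anti₀ (by positivity)
        have : (√|s| * (2 / π) * u) ^ 2 = |s| * (2 / π * u) ^ 2 := by
          rw [← hq2]; simp only [hq2]; rw [mul_assoc, mul_pow, hq2]
        rw [this]
        gcongr
      rcases le_total θ (π / 2) with h | h
      · have := gen θ hθ.1 h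
        have := pw (α * (π - θ))
        linarith
      · have := gen (π - θ) (by linarith [hθ.2]) (by linarith)
        rw [Real.sin_pi_sub] at this
        have := pw (α * θ)
        linarith
    calc _ ≤ (2 * (w (α * θ) + w (α * (π - θ)))) * M := by
          apply mul_le_mul (b1.trans (by linarith)) (hkM θ hθ) (abs_nonneg _)
          have := pw (α * (π - θ)); have := pw (α * θ)
          positivity
      _ = _ := by ring
  have i1 : IntervalIntegrable (fun θ => w (α * θ)) volume 0 π :=
    (cw.comp (by fun_prop)).intervalIntegrable _ _
  have i2 : IntervalIntegrable (fun θ => w (α * (π - θ))) volume 0 π :=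
    (cw.comp (by fun_prop)).intervalIntegrable _ _
  have e2 : (∫ θ in (0 : ℝ)..π, (|s| + |s * (-Real.cos θ)|) / ((s * (-Real.sin θ)) ^ 2 + |s|) * |k θ|)
      ≤ M * π ^ 2 / √|s| := by
    have h3 := intervalIntegral.integral_mono_on hπ.le (by
      apply Continuous.intervalIntegrable
      refine Continuous.mul (Continuous.div (by fun_prop) (by fun_prop) fun θ => ?_) (by fun_prop)
      positivity) ((i1.add i2).const_mul (2 * M)) pt
    refine h3.trans ?_
    rw [intervalIntegral.integral_const_mul, intervalIntegral.integral_add i1 i2, W2]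
    calc _ ≤ 2 * M * (π / 2 / α + π / 2 / α) := by gcongr
      _ = _ := by rw [hα]; field_simp; ring
  have h3 := hkM 0 h0
  have h4 := hkM π h1
  calc _ ≤ (M + M) / (2 * √|s|) + M * π ^ 2 / √|s| + (M * π) / (2 * √|s|) := by gcongr
    _ = _ := by field_simp; ring

/-! ### Zonal oscillatory integrals on the sphere -/

/-- The amplitude left after extracting `e^{is}` from a zonal oscillatory integral on the sphere. -/
def zonalAmp (n : ℕ) (k : ℝ → ℝ) (s : ℝ) : ℂ :=
  ∫ θ in (0 : ℝ)..π, Complex.exp (Complex.I * ((s * (Real.cos θ - 1) : ℝ) : ℂ)) *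
    ((Real.sin θ ^ n * k θ : ℝ) : ℂ)

theorem five_halves_lt_pi : (5 : ℝ) / 2 < π := by linarith [Real.pi_gt_three]

theorem one_add_cos_pos_of_abs_lt {θ : ℝ} (h : |θ| < π) : 0 < 1 + Real.cos θ := by
  have h1 : 0 < Real.cos (θ / 2) := by
    apply Real.cos_pos_of_mem_Ioo
    rw [abs_lt] at h
    constructor <;> linarith [h.1, h.2]
  have h2 : Real.cos θ = 2 * Real.cos (θ / 2) ^ 2 - 1 := by
    rw [← Real.cos_two_mul]; congr 1; ring
  rw [h2]; nlinarith

theorem integral_exp_cos_mul_sin {g g' : ℝ → ℝ} {s : ℝ} (hs : s ≠ 0)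
    (hg : ∀ θ, HasDerivAt g (g' θ) θ) (hg' : Continuous g') :
    ∫ θ in (0 : ℝ)..π, Complex.exp (Complex.I * ((s * (Real.cos θ - 1) : ℝ) : ℂ)) *
        ((Real.sin θ * g θ : ℝ) : ℂ) =
      Complex.I / s * (Complex.exp (Complex.I * ((s * (Real.cos π - 1) : ℝ) : ℂ)) * g π - g 0 -
        ∫ θ in (0 : ℝ)..π, Complex.exp (Complex.I * ((s * (Real.cos θ - 1) : ℝ) : ℂ)) *
          (g' θ : ℂ)) := by
  have hs' : (s : ℂ) ≠ 0 := by exact_mod_cast hs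
  have ibp := intervalIntegral.integral_mul_deriv_eq_deriv_mul (a := 0) (b := π)
    (u := fun θ => (g θ : ℂ)) (u' := fun θ => (g' θ : ℂ))
    (v := fun θ => Complex.exp (Complex.I * ((s * (Real.cos θ - 1) : ℝ) : ℂ)))
    (fun θ _ => (hg θ).ofReal_comp)
    (fun θ _ => hasDerivAt_exp_I_mul (((Real.hasDerivAt_cos θ).sub_const 1).const_mul s))
    (Continuous.intervalIntegrable (by fun_prop) _ _)
    (Continuous.intervalIntegrable (by fun_prop) _ _)
  have e1 : ∀ θ : ℝ, Complex.exp (Complex.I * ((s * (Real.cos θ - 1) : ℝ) : ℂ)) *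
      ((Real.sin θ * g θ : ℝ) : ℂ) = Complex.I / s * ((g θ : ℂ) *
        (Complex.exp (Complex.I * ((s * (Real.cos θ - 1) : ℝ) : ℂ)) *
          (Complex.I * ((s * -Real.sin θ : ℝ) : ℂ)))) := by
    intro θ
    push_cast
    field_simp
    simp only [Complex.I_sq]
    ring
  simp_rw [e1]
  rw [intervalIntegral.integral_const_mul, ibp]
  simp only [Real.cos_zero, sub_self, mul_zero, Complex.ofReal_zero, Complex.exp_zero, mul_one]
  congr 2
  · ring
  · congr 1; ext θ; ring

theorem exists_abs_le_on_zero_pi {k : ℝ → ℝ} (hk : Continuous k) :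
    ∃ M, 0 ≤ M ∧ ∀ r ∈ Set.Icc 0 π, |k r| ≤ M := by
  obtain ⟨M, hM⟩ := (isCompact_Icc (a := (0 : ℝ)) (b := π)).exists_bound_of_continuousOn
    hk.continuousOn
  exact ⟨M, (norm_nonneg _).trans (hM 0 ⟨le_rfl, Real.pi_pos.le⟩), hM⟩

theorem norm_zonalAmp_le (n : ℕ) : ∀ k : ℝ → ℝ, ContDiff ℝ (⊤ : ℕ∞) k →
    (∀ θ, 5 / 2 < |θ| → k θ = 0) →
    ∃ C, 0 ≤ C ∧ ∀ s : ℝ, s ≠ 0 → ‖zonalAmp n k s‖ ≤ C / √|s| ^ (n + 1) := by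
  have deriv_zero : ∀ k : ℝ → ℝ, (∀ θ, 5 / 2 < |θ| → k θ = 0) →
      ∀ θ, 5 / 2 < |θ| → deriv k θ = 0 := by
    intro k hk θ hθ
    have : k =ᶠ[nhds θ] fun _ => 0 := by
      filter_upwards [(isOpen_lt continuous_const continuous_abs).mem_nhds hθ] with x hx
      exact hk x hx
    rw [this.deriv_eq]; simp
  have hd : ∀ k : ℝ → ℝ, ContDiff ℝ (⊤ : ℕ∞) k → (∀ θ, HasDerivAt k (deriv k θ) θ) ∧
      ContDiff ℝ (⊤ : ℕ∞) (deriv k) := fun k hk =>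
    ⟨fun θ => ((hk.differentiable (by simp)) θ).hasDerivAt, (contDiff_infty_iff_deriv.1 hk).2⟩
  have hππ : (5 : ℝ) / 2 < |π| := by rw [abs_of_pos Real.pi_pos]; exact five_halves_lt_pi
  induction n using Nat.twoStepInduction with
  | zero =>
    intro k hk _
    obtain ⟨h1, h2⟩ := hd k hk
    obtain ⟨M1, hM1, hb1⟩ := exists_abs_le_on_zero_pi hk.continuous
    obtain ⟨M2, hM2, hb2⟩ := exists_abs_le_on_zero_pi h2.continuous
    refine ⟨max M1 M2 * (1 + π ^ 2 + π / 2), by positivity, fun s hs => ?_⟩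
    have := norm_integral_exp_cos_le hs h1 h2.continuous
      (fun r hr => (hb1 r hr).trans (le_max_left M1 M2))
      (fun r hr => (hb2 r hr).trans (le_max_right M1 M2))
    simpa [zonalAmp] using this
  | one =>
    intro k hk hk0
    obtain ⟨h1, h2⟩ := hd k hk
    obtain ⟨M2, hM2, hb2⟩ := exists_abs_le_on_zero_pi h2.continuous
    refine ⟨|k 0| + M2 * π, by positivity, fun s hs => ?_⟩
    have e : √|s| ^ (1 + 1) = |s| := Real.sq_sqrt (abs_nonneg s)
    rw [e, zonalAmp]
    simp only [pow_one]
    rw [integral_exp_cos_mul_sin hs h1 h2.continuous, hk0 π hππ, norm_mul, norm_div, Complex.norm_I,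
      Complex.norm_real, Real.norm_eq_abs, div_mul_eq_mul_div, one_mul]
    apply div_le_div_of_nonneg_right _ (abs_nonneg _)
    refine (norm_sub_le _ _).trans (add_le_add (by simp) ?_)
    have := intervalIntegral.norm_integral_le_of_norm_le_const (a := 0) (b := π) (C := M2)
      (f := fun θ => Complex.exp (Complex.I * ((s * (Real.cos θ - 1) : ℝ) : ℂ)) *
          ((deriv k θ : ℝ) : ℂ)) (by
        intro θ hθ
        rw [Set.uIoc_of_le Real.pi_pos.le] at hθ
        rw [norm_mul, norm_exp_I_mul_real, one_mul, Complex.norm_real]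
        exact hb2 θ ⟨hθ.1.le, hθ.2⟩)
    rwa [sub_zero, abs_of_pos Real.pi_pos] at this
  | more n ih _ =>
    intro k hk hk0
    obtain ⟨h1, h2⟩ := hd k hk
    set k2 : ℝ → ℝ := fun θ => (n + 1) * Real.cos θ * k θ + Real.sin θ * deriv k θ with hk2
    obtain ⟨C, hC, hb⟩ := ih k2 (by
        exact ((contDiff_const.mul Real.contDiff_cos).mul hk).add (Real.contDiff_sin.mul h2)) (by
      intro θ hθ
      simp only [hk2, hk0 θ hθ, deriv_zero k hk0 θ hθ, mul_zero, add_zero])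
    refine ⟨C, hC, fun s hs => ?_⟩
    have hs' : 0 < |s| := abs_pos.2 hs
    have hg : ∀ θ, HasDerivAt (fun θ => Real.sin θ ^ (n + 1) * k θ) (Real.sin θ ^ n * k2 θ) θ := by
      intro θ
      refine (((Real.hasDerivAt_sin θ).pow (n + 1)).mul (h1 θ)).congr_deriv ?_
      simp only [hk2, Nat.add_sub_cancel]
      push_cast
      simp
      ring
    have key := integral_exp_cos_mul_sin hs hg (by
      have := h2.continuous
      have := hk.continuous
      simp only [hk2]
      fun_prop)
    have e0 : zonalAmp (n + 2) k s = Complex.I / s * (-zonalAmp n k2 s) := by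
      rw [zonalAmp]
      have : ∀ θ : ℝ, Real.sin θ ^ (n + 2) * k θ = Real.sin θ * (Real.sin θ ^ (n + 1) * k θ) :=
        fun θ => by ring
      simp_rw [this]
      rw [key, hk0 π hππ]
      simp [zonalAmp]
    have e : √|s| ^ (n + 2 + 1) = √|s| ^ (n + 1) * |s| := by
      rw [← Real.sq_sqrt hs'.le]; simp only [Real.sq_sqrt hs'.le]
      rw [show n + 2 + 1 = (n + 1) + 2 by ring, pow_add, Real.sq_sqrt hs'.le]
    rw [e0, e, norm_mul, norm_div, Complex.norm_I, Complex.norm_real, Real.norm_eq_abs, norm_neg,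
      ← div_div, div_mul_eq_mul_div, one_mul]
    exact div_le_div_of_nonneg_right (hb s hs) hs'.le

theorem contDiff_div_one_add_cos {k : ℝ → ℝ} (hk : ContDiff ℝ (⊤ : ℕ∞) k)
    (hk0 : ∀ θ, 5 / 2 < |θ| → k θ = 0) :
    ContDiff ℝ (⊤ : ℕ∞) fun θ => k θ / (1 + Real.cos θ) := by
  rw [contDiff_iff_contDiffAt]
  intro θ
  rcases lt_or_ge |θ| π with h | h
  · exact hk.contDiffAt.div (contDiffAt_const.add Real.contDiff_cos.contDiffAt)
      (one_add_cos_pos_of_abs_lt h).ne'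
  · apply (contDiffAt_const (c := (0 : ℝ))).congr_of_eventuallyEq
    filter_upwards [(isOpen_lt continuous_const continuous_abs).mem_nhds
      (five_halves_lt_pi.trans_le h)] with x hx
    rw [hk0 x hx, zero_div]

theorem hasDerivAt_zonalAmp (n : ℕ) {k : ℝ → ℝ} (hk : Continuous k)
    (hk0 : ∀ θ, 5 / 2 < |θ| → k θ = 0) (s : ℝ) :
    HasDerivAt (zonalAmp n k)
      (-Complex.I * zonalAmp (n + 2) (fun θ => k θ / (1 + Real.cos θ)) s) s := by
  obtain ⟨M, hM, hb⟩ := exists_abs_le_on_zero_pi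
    (k := fun θ => (Real.cos θ - 1) * (Real.sin θ ^ n * k θ)) (by fun_prop)
  have := (intervalIntegral.hasDerivAt_integral_of_dominated_loc_of_deriv_le
    (μ := volume) (a := 0) (b := π) (x₀ := s) (s := Set.univ) (bound := fun _ => M)
    (F := fun s θ => Complex.exp (Complex.I * ((s * (Real.cos θ - 1) : ℝ) : ℂ)) *
      ((Real.sin θ ^ n * k θ : ℝ) : ℂ))
    (F' := fun s θ => Complex.exp (Complex.I * ((s * (Real.cos θ - 1) : ℝ) : ℂ)) *
      (Complex.I * ((1 * (Real.cos θ - 1) : ℝ) : ℂ)) * ((Real.sin θ ^ n * k θ : ℝ) : ℂ))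
    Filter.univ_mem
    (Filter.Eventually.of_forall fun s => (Continuous.aestronglyMeasurable (by fun_prop)))
    (Continuous.intervalIntegrable (by fun_prop) _ _)
    (Continuous.aestronglyMeasurable (by fun_prop)) ?_ intervalIntegrable_const ?_).2
  · refine this.congr_deriv ?_
    rw [zonalAmp, ← intervalIntegral.integral_const_mul]
    apply intervalIntegral.integral_congr
    intro θ hθ
    rw [Set.uIcc_of_le Real.pi_pos.le] at hθ
    simp only
    by_cases h : 5 / 2 < |θ|
    · simp [hk0 θ h]
    · have h3 := one_add_cos_pos_of_abs_lt ((not_lt.1 h).trans_lt five_halves_lt_pi)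
      have h4 : (1 * (Real.cos θ - 1)) * (Real.sin θ ^ n * k θ) =
          -(Real.sin θ ^ (n + 2) * (k θ / (1 + Real.cos θ))) := by
        field_simp
        rw [pow_add, Real.sin_sq]
        ring
      rw [mul_assoc _ (Complex.I * _), mul_assoc Complex.I, ← Complex.ofReal_mul, h4]
      push_cast
      ring
  · filter_upwards with θ hθ x _
    rw [Set.uIoc_of_le Real.pi_pos.le] at hθ
    rw [mul_assoc, norm_mul, norm_exp_I_mul_real, mul_assoc, norm_mul, Complex.norm_I,
      ← Complex.ofReal_mul, Complex.norm_real, one_mul, one_mul, one_mul]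
    exact hb θ ⟨hθ.1.le, hθ.2⟩
  · filter_upwards with θ hθ x _
    exact (hasDerivAt_exp_I_mul ((hasDerivAt_id x).mul_const _)).mul_const _

/-- A smooth cutoff equal to one near `0` whose reflections about `π / 2` sum to one on
`[0, π]`. -/
def poleCutoff (θ : ℝ) : ℝ :=
  Real.smoothTransition (1 / 2 + π / 2 - θ) * Real.smoothTransition (1 / 2 + π / 2 + θ)

theorem contDiff_poleCutoff : ContDiff ℝ (⊤ : ℕ∞) poleCutoff := by
  unfold poleCutoff
  exact (Real.smoothTransition.contDiff.comp (contDiff_const.sub contDiff_id)).mul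
    (Real.smoothTransition.contDiff.comp (contDiff_const.add contDiff_id))

theorem poleCutoff_eq_zero {θ : ℝ} (h : 5 / 2 < |θ|) : poleCutoff θ = 0 := by
  have := Real.pi_lt_d2
  unfold poleCutoff
  rcases lt_abs.1 h with h | h
  · rw [Real.smoothTransition.zero_of_nonpos (by linarith), zero_mul]
  · rw [Real.smoothTransition.zero_of_nonpos (x := 1 / 2 + π / 2 + θ) (by linarith), mul_zero]

theorem poleCutoff_add_reflect {θ : ℝ} (h0 : 0 ≤ θ) (h1 : θ ≤ π) :
    poleCutoff θ + poleCutoff (π - θ) = 1 := by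
  have := Real.pi_gt_three
  unfold poleCutoff
  rw [Real.smoothTransition.one_of_one_le (x := 1 / 2 + π / 2 + θ) (by linarith),
    Real.smoothTransition.one_of_one_le (x := 1 / 2 + π / 2 + (π - θ)) (by linarith), mul_one,
    mul_one, show 1 / 2 + π / 2 - (π - θ) = 1 - (1 / 2 + π / 2 - θ) by ring]
  have h := Real.smoothTransition.pos_denom (1 / 2 + π / 2 - θ)
  have h2 : 1 - (1 - (1 / 2 + π / 2 - θ)) = 1 / 2 + π / 2 - θ := by ring
  unfold Real.smoothTransition
  rw [h2, add_comm (expNegInvGlue (1 - (1 / 2 + π / 2 - θ))), ← add_div, div_self h.ne']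

theorem integral_exp_cos_eq (n : ℕ) (s : ℝ) :
    ∫ θ in (0 : ℝ)..π, Complex.exp (Complex.I * ((s * Real.cos θ : ℝ) : ℂ)) *
        ((Real.sin θ ^ n : ℝ) : ℂ) =
      Complex.exp (Complex.I * (s : ℂ)) * zonalAmp n poleCutoff s +
        Complex.exp (Complex.I * ((-s : ℝ) : ℂ)) * zonalAmp n poleCutoff (-s) := by
  have ck := contDiff_poleCutoff.continuous
  have e2 : zonalAmp n poleCutoff (-s) = ∫ θ in (0 : ℝ)..π,
      Complex.exp (Complex.I * ((-s * (Real.cos (π - θ) - 1) : ℝ) : ℂ)) *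
        ((Real.sin (π - θ) ^ n * poleCutoff (π - θ) : ℝ) : ℂ) := by
    rw [intervalIntegral.integral_comp_sub_left (fun θ =>
      Complex.exp (Complex.I * ((-s * (Real.cos θ - 1) : ℝ) : ℂ)) *
        ((Real.sin θ ^ n * poleCutoff θ : ℝ) : ℂ)) π]
    simp [zonalAmp]
  rw [e2, zonalAmp, ← intervalIntegral.integral_const_mul, ← intervalIntegral.integral_const_mul,
    ← intervalIntegral.integral_add (Continuous.intervalIntegrable (by fun_prop) _ _)
      (Continuous.intervalIntegrable (by fun_prop) _ _)]
  apply intervalIntegral.integral_congr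
  intro θ hθ
  rw [Set.uIcc_of_le Real.pi_pos.le] at hθ
  have h := poleCutoff_add_reflect hθ.1 hθ.2
  simp only [Real.sin_pi_sub, Real.cos_pi_sub]
  rw [← mul_assoc, ← mul_assoc, ← Complex.exp_add, ← Complex.exp_add]
  have a1 : Complex.I * (s : ℂ) + Complex.I * ((s * (Real.cos θ - 1) : ℝ) : ℂ) =
      Complex.I * ((s * Real.cos θ : ℝ) : ℂ) := by push_cast; ring
  have a2 : Complex.I * ((-s : ℝ) : ℂ) + Complex.I * ((-s * (-Real.cos θ - 1) : ℝ) : ℂ) =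
      Complex.I * ((s * Real.cos θ : ℝ) : ℂ) := by push_cast; ring
  rw [a1, a2, ← mul_add, ← Complex.ofReal_add, ← mul_add, h, mul_one]

/-! ### Fourier transforms of radial functions -/

theorem integral_inner_norm_eq {n : ℕ} (x : Euc (n + 1)) (f : ℝ → ℝ → ℂ) :
    ∫ ξ : Euc (n + 1), f ⟪x, ξ⟫ ‖ξ‖ = ∫ ξ : Euc (n + 1), f (‖x‖ * ξ 0) ‖ξ‖ := by
  set v : Euc (n + 1) := ‖x‖ • EuclideanSpace.single 0 (1 : ℝ) with hv
  have hn : ‖x‖ = ‖v‖ := by rw [hv, norm_smul]; simp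
  set R := (ℝ ∙ (x - v))ᗮ.reflection with hR
  have hRx : R x = v := Submodule.reflection_sub hn
  have h := R.measurePreserving.integral_comp R.toHomeomorph.measurableEmbedding
    (fun ξ => f (⟪x, ξ⟫) ‖ξ‖)
  rw [← h]
  congr 1
  ext ξ
  have h1 : ⟪x, R ξ⟫ = ‖x‖ * ξ 0 := by
    have h2 : ⟪R x, R (R ξ)⟫ = ⟪x, R ξ⟫ := R.inner_map_map x (R ξ)
    rw [← h2, hRx, hR, Submodule.reflection_reflection, hv, inner_smul_left]
    simp [EuclideanSpace.inner_single_left]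
  rw [h1, R.norm_map]

theorem integral_coord_norm_eq {n : ℕ} (f : ℝ → ℝ → ℂ) :
    ∫ ξ : Euc (n + 1), f (ξ 0) ‖ξ‖ =
      ∫ z : ℝ × Euc n, f z.1 (√(z.1 ^ 2 + ‖z.2‖ ^ 2)) := by
  have m1 := PiLp.volume_preserving_toLp (Fin (n + 1))
  have m2 := (volume_preserving_piFinSuccAbove (fun _ : Fin (n + 1) => ℝ) 0).symm
  have m3 : MeasurePreserving (Prod.map id (@WithLp.ofLp 2 (Fin n → ℝ)) :
      ℝ × Euc n → ℝ × (Fin n → ℝ)) :=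
    (MeasurePreserving.id volume).prod (PiLp.volume_preserving_ofLp (Fin n))
  rw [← m1.integral_comp (MeasurableEquiv.toLp 2 (Fin (n + 1) → ℝ)).measurableEmbedding,
    ← m2.integral_comp (MeasurableEquiv.measurableEmbedding _),
    ← m3.integral_comp (MeasurableEmbedding.id.prodMap
      (MeasurableEquiv.toLp 2 (Fin n → ℝ)).symm.measurableEmbedding)]
  congr 1
  ext z
  simp [EuclideanSpace.norm_eq, Fin.sum_univ_succ, MeasurableEquiv.piFinSuccAbove,
    Fin.insertNthEquiv]
  rw [Real.sq_sqrt (by positivity)]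

theorem intervalIntegral_eq_integral_Ioi {f : ℝ → ℂ}
    (hf : ∀ r, r ∉ Set.Icc (1 / 2 : ℝ) 2 → f r = 0) :
    ∫ r in Set.Ioi (0 : ℝ), f r = ∫ r in (1 / 4 : ℝ)..4, f r := by
  rw [intervalIntegral.integral_of_le (by norm_num)]
  apply setIntegral_eq_of_subset_of_forall_sdiff_eq_zero measurableSet_Ioi
  · intro r hr; exact lt_trans (by norm_num) hr.1
  · intro r hr
    apply hf
    intro h
    exact hr.2 ⟨by linarith [h.1], by linarith [h.2]⟩

theorem radial_integral_one {F : ℝ → ℂ} (hF : Continuous F)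
    (hF0 : ∀ r, r ∉ Set.Icc (1 / 2 : ℝ) 2 → F r = 0) (x : Euc 1) :
    ∫ ξ : Euc 1, Complex.exp (Complex.I * ((⟪x, ξ⟫ : ℝ) : ℂ)) * F ‖ξ‖ =
      (∫ r in (1 / 4 : ℝ)..4, Complex.exp (Complex.I * ((‖x‖ * r : ℝ) : ℂ)) * F r) +
      ∫ r in (1 / 4 : ℝ)..4, Complex.exp (Complex.I * ((-‖x‖ * r : ℝ) : ℂ)) * F r := by
  rw [integral_inner_norm_eq x (fun a r => Complex.exp (Complex.I * (a : ℂ)) * F r),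
    integral_coord_norm_eq (fun a r => Complex.exp (Complex.I * ((‖x‖ * a : ℝ) : ℂ)) * F r)]
  set g : ℝ → ℂ := fun a => Complex.exp (Complex.I * ((‖x‖ * a : ℝ) : ℂ)) * F |a| with hg
  have cg : Continuous g := by simp only [hg]; fun_prop
  have sg : HasCompactSupport g := by
    apply HasCompactSupport.intro (isCompact_Icc (a := (-2 : ℝ)) (b := 2))
    intro a ha
    simp only [hg]
    rw [hF0, mul_zero]
    intro h
    exact ha (abs_le.1 h.2)
  have ig : Integrable g := cg.integrable_of_hasCompactSupport sg
  have e1 : (∫ z : ℝ × Euc 0, Complex.exp (Complex.I * ((‖x‖ * z.1 : ℝ) : ℂ)) *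
      F (√(z.1 ^ 2 + ‖z.2‖ ^ 2))) = ∫ z : ℝ × Euc 0, g z.1 * 1 := by
    congr 1
    ext z
    have : z.2 = 0 := Subsingleton.elim _ _
    simp [hg, this, Real.sqrt_sq_eq_abs]
  rw [e1, Measure.volume_eq_prod, integral_prod_mul (f := g) (g := fun _ => (1 : ℂ)),
    volume_euclideanSpace_eq_dirac, integral_dirac, mul_one,
    ← intervalIntegral.integral_Iic_add_Ioi (b := 0) ig.integrableOn ig.integrableOn,
    add_comm]
  congr 1
  · rw [← intervalIntegral_eq_integral_Ioi]
    · apply setIntegral_congr_fun measurableSet_Ioi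
      intro r hr
      simp only [hg, abs_of_pos (Set.mem_Ioi.1 hr)]
    · intro r hr; rw [hF0 r hr, mul_zero]
  · rw [← neg_zero, ← integral_comp_neg_Ioi, ← intervalIntegral_eq_integral_Ioi]
    · apply setIntegral_congr_fun measurableSet_Ioi
      intro r hr
      simp only [hg, abs_neg, abs_of_pos (Set.mem_Ioi.1 hr), mul_neg, neg_mul]
    · intro r hr; rw [hF0 r hr, mul_zero]

theorem radial_integral_two_le (m : ℕ) : ∃ c : ℂ, ∀ F : ℝ → ℂ, Continuous F →
    (∀ r, r ∉ Set.Icc (1 / 2 : ℝ) 2 → F r = 0) → ∀ x : Euc (m + 2),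
    ∫ ξ : Euc (m + 2), Complex.exp (Complex.I * ((⟪x, ξ⟫ : ℝ) : ℂ)) * F ‖ξ‖ =
      c * ∫ r in (1 / 4 : ℝ)..4, ∫ θ in (0 : ℝ)..π, F r * (r : ℂ) ^ (m + 1) *
        (Complex.exp (Complex.I * ((‖x‖ * r * Real.cos θ : ℝ) : ℂ)) *
          ((Real.sin θ ^ m : ℝ) : ℂ)) := by
  refine ⟨((m + 1 : ℕ) : ℂ) * ((volume.real (Metric.ball (0 : Euc (m + 1)) 1) : ℝ) : ℂ), ?_⟩
  intro F hF hF0 x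
  rw [integral_inner_norm_eq x (fun a r => Complex.exp (Complex.I * (a : ℂ)) * F r),
    integral_coord_norm_eq (fun a r => Complex.exp (Complex.I * ((‖x‖ * a : ℝ) : ℂ)) * F r)]
  have bnd : ∀ a y : ℝ, F (√(a ^ 2 + y ^ 2)) ≠ 0 → |a| ≤ 2 ∧ |y| ≤ 2 := by
    intro a y h
    have h1 : √(a ^ 2 + y ^ 2) ≤ 2 := by
      by_contra h2
      exact h (hF0 _ fun h3 => h2 h3.2)
    rw [Real.sqrt_le_left (by norm_num)] at h1
    constructor <;> apply abs_le_of_sq_le_sq _ (by norm_num) <;> nlinarith [sq_nonneg a, sq_nonneg y]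
  rw [Measure.volume_eq_prod, integral_prod]
  swap
  · apply Continuous.integrable_of_hasCompactSupport (by fun_prop)
    apply HasCompactSupport.intro ((isCompact_Icc (a := (-2 : ℝ)) (b := 2)).prod
      (isCompact_closedBall (0 : Euc (m + 1)) 2))
    rintro ⟨a, η⟩ h
    by_contra h2
    have h3 := bnd a ‖η‖ (right_ne_zero_of_mul h2)
    apply h
    rw [abs_norm] at h3
    exact ⟨abs_le.1 h3.1, by simpa using h3.2⟩
  set f2 : ℝ × ℝ → ℂ := Set.indicator (Set.univ ×ˢ Set.Ioi 0) (fun z =>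
    (z.2 : ℂ) ^ m * (Complex.exp (Complex.I * ((‖x‖ * z.1 : ℝ) : ℂ)) * F (√(z.1 ^ 2 + z.2 ^ 2))))
    with hf2
  have if2 : Integrable f2 := by
    apply Integrable.indicator _ (MeasurableSet.univ.prod measurableSet_Ioi)
    apply Continuous.integrable_of_hasCompactSupport (by fun_prop)
    apply HasCompactSupport.intro ((isCompact_Icc (a := (-2 : ℝ)) (b := 2)).prod
      (isCompact_Icc (a := (-2 : ℝ)) (b := 2)))
    rintro ⟨a, y⟩ h
    by_contra h2
    have h3 := bnd a y (right_ne_zero_of_mul (right_ne_zero_of_mul h2))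
    exact h ⟨abs_le.1 h3.1, abs_le.1 h3.2⟩
  have inner : ∀ a : ℝ, (∫ η : Euc (m + 1), Complex.exp (Complex.I * ((‖x‖ * a : ℝ) : ℂ)) *
      F (√(a ^ 2 + ‖η‖ ^ 2))) =
      ((m + 1 : ℕ) : ℂ) * ((volume.real (Metric.ball (0 : Euc (m + 1)) 1) : ℝ) : ℂ) *
        ∫ y : ℝ, f2 (a, y) := by
    intro a
    rw [integral_fun_norm_addHaar volume (fun y => Complex.exp (Complex.I * ((‖x‖ * a : ℝ) : ℂ)) *
      F (√(a ^ 2 + y ^ 2)))]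
    rw [← integral_indicator measurableSet_Ioi, finrank_euclideanSpace_fin, nsmul_eq_mul,
      Complex.real_smul, ← mul_assoc]
    congr 2
    ext y
    simp only [hf2, Set.indicator_apply, Set.mem_Ioi, Set.mem_prod, Set.mem_univ, true_and,
      Nat.add_sub_cancel, Complex.real_smul]
    push_cast
    rfl
  simp_rw [inner]
  rw [integral_const_mul, ← integral_prod f2 if2, ← Measure.volume_eq_prod,
    ← integral_comp_polarCoord_symm]
  congr 1
  set K : ℝ × ℝ → ℂ := fun p => F p.1 * (p.1 : ℂ) ^ (m + 1) *
        (Complex.exp (Complex.I * ((‖x‖ * p.1 * Real.cos p.2 : ℝ) : ℂ)) *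
          ((Real.sin p.2 ^ m : ℝ) : ℂ)) with hK
  have cK : Continuous K := by simp only [hK]; fun_prop
  have step : (∫ p in polarCoord.target, p.1 • f2 (polarCoord.symm p)) =
      ∫ p in Set.Ioc (1 / 4 : ℝ) 4 ×ˢ Set.Ioo 0 π, K p := by
    have hpt : ∀ p ∈ polarCoord.target, p.1 • f2 (polarCoord.symm p) =
        Set.indicator (Set.Ioc (1 / 4 : ℝ) 4 ×ˢ Set.Ioo 0 π) K p := by
      rintro ⟨r, θ⟩ ⟨hr, hθ⟩
      have hr : 0 < r := hr
      have hθ : θ ∈ Set.Ioo (-π) π := hθ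
      have hsq : √((r * Real.cos θ) ^ 2 + (r * Real.sin θ) ^ 2) = r := by
        rw [mul_pow, mul_pow, ← mul_add, Real.cos_sq_add_sin_sq, mul_one, Real.sqrt_sq hr.le]
      have hsin : 0 < r * Real.sin θ ↔ 0 < θ := by
        rw [mul_pos_iff_of_pos_left hr]
        constructor
        · intro h
          by_contra h2
          have := Real.sin_nonpos_of_nonpos_of_neg_pi_le (not_lt.1 h2) hθ.1.le
          linarith
        · intro h; exact Real.sin_pos_of_pos_of_lt_pi h hθ.2
      simp only [hf2, polarCoord_symm_apply, Set.indicator_apply, Set.mem_prod, Set.mem_univ,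
        true_and, Set.mem_Ioi, hsin, Set.mem_Ioc, Set.mem_Ioo, hθ.2, and_true, hsq, hK]
      by_cases h1 : 0 < θ
      · by_cases h2 : 1 / 4 < r ∧ r ≤ 4
        · simp only [h1, h2, and_self, if_true, Complex.real_smul]
          push_cast
          ring_nf
        · have : F r = 0 := hF0 r fun h => h2 ⟨by linarith [h.1], by linarith [h.2]⟩
          simp [this]
      · simp [h1]
    rw [setIntegral_congr_fun polarCoord.open_target.measurableSet hpt,
      setIntegral_indicator (measurableSet_Ioc.prod measurableSet_Ioo)]
    congr 2
    apply Set.inter_eq_right.2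
    rintro ⟨r, θ⟩ ⟨h1, h2⟩
    exact ⟨lt_trans (by norm_num) h1.1, lt_trans (by linarith [Real.pi_pos]) h2.1, h2.2⟩
  rw [step, Measure.volume_eq_prod, setIntegral_prod,
    intervalIntegral.integral_of_le (by norm_num)]
  · apply setIntegral_congr_fun measurableSet_Ioc
    intro r _
    simp only [hK]
    rw [intervalIntegral.integral_of_le Real.pi_pos.le, integral_Ioc_eq_integral_Ioo]
  · rw [← Measure.volume_eq_prod]
    exact (cK.continuousOn.integrableOn_compact
      ((isCompact_Icc (a := (1 / 4 : ℝ)) (b := 4)).prod (isCompact_Icc (a := (0 : ℝ)) (b := π)))).mono_set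
      (Set.prod_mono Set.Ioc_subset_Icc_self Set.Ioo_subset_Icc_self)

theorem radial_representation (d : ℕ) (hd : 1 ≤ d) : ∃ (H H' : ℝ → ℂ) (C : ℝ), 0 ≤ C ∧
    (∀ u, HasDerivAt H (H' u) u) ∧ Continuous H' ∧
    (∀ u, u ≠ 0 → ‖H u‖ ≤ C / √|u| ^ (d - 1)) ∧
    (∀ u, u ≠ 0 → ‖H' u‖ ≤ C / (√|u| ^ (d - 1) * |u|)) ∧
    ∀ F : ℝ → ℂ, Continuous F → (∀ r, r ∉ Set.Icc (1 / 2 : ℝ) 2 → F r = 0) → ∀ x : Euc d,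
      (∫ ξ : Euc d, Complex.exp (Complex.I * ((⟪x, ξ⟫ : ℝ) : ℂ)) * F ‖ξ‖ =
        (∫ r in (1 / 4 : ℝ)..4, Complex.exp (Complex.I * ((‖x‖ * r : ℝ) : ℂ)) *
          (F r * (r : ℂ) ^ (d - 1) * H (‖x‖ * r))) +
        ∫ r in (1 / 4 : ℝ)..4, Complex.exp (Complex.I * ((-‖x‖ * r : ℝ) : ℂ)) *
          (F r * (r : ℂ) ^ (d - 1) * H (-‖x‖ * r))) ∧
      ∀ B : ℝ, (∀ σ ∈ Set.Icc (-‖x‖) ‖x‖, ‖∫ r in (1 / 4 : ℝ)..4,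
          Complex.exp (Complex.I * ((σ * r : ℝ) : ℂ)) * (F r * (r : ℂ) ^ (d - 1))‖ ≤ B) →
        ‖∫ ξ : Euc d, Complex.exp (Complex.I * ((⟪x, ξ⟫ : ℝ) : ℂ)) * F ‖ξ‖‖ ≤ C * B := by
  obtain rfl | ⟨m, rfl⟩ : d = 1 ∨ ∃ m, d = m + 2 := by
    rcases d with _ | _ | m
    · omega
    · exact Or.inl rfl
    · exact Or.inr ⟨m, rfl⟩
  · refine ⟨fun _ => 1, fun _ => 0, 2, by norm_num, fun u => hasDerivAt_const u _,
      continuous_const, fun u hu => by simp, fun u hu => by simp; positivity, ?_⟩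
    intro F hF hF0 x
    have h := radial_integral_one hF hF0 x
    refine ⟨by simpa using h, fun B hB => ?_⟩
    have h1 := hB ‖x‖ ⟨by linarith [norm_nonneg x], le_rfl⟩
    have h2 := hB (-‖x‖) ⟨le_rfl, by linarith [norm_nonneg x]⟩
    simp only [Nat.sub_self, pow_zero, mul_one] at h1 h2
    rw [h]
    refine (norm_add_le _ _).trans (by linarith)
  · obtain ⟨c, hc⟩ := radial_integral_two_le m
    have ck := contDiff_poleCutoff
    have ck2 := contDiff_div_one_add_cos ck (fun θ h => poleCutoff_eq_zero h)
    have k20 : ∀ θ : ℝ, 5 / 2 < |θ| → (fun θ => poleCutoff θ / (1 + Real.cos θ)) θ = 0 := by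
      intro θ h; simp [poleCutoff_eq_zero h]
    obtain ⟨C₁, hC₁, hb₁⟩ := norm_zonalAmp_le m poleCutoff ck (fun θ h => poleCutoff_eq_zero h)
    obtain ⟨C₂, hC₂, hb₂⟩ := norm_zonalAmp_le (m + 2) _ ck2 k20
    have hH := hasDerivAt_zonalAmp m ck.continuous (fun θ h => poleCutoff_eq_zero h)
    have hH2 := hasDerivAt_zonalAmp (m + 2) ck2.continuous k20
    have cH : Continuous (zonalAmp m poleCutoff) :=
      continuous_iff_continuousAt.2 fun u => (hH u).continuousAt
    have cH2 : Continuous (zonalAmp (m + 2) (fun θ => poleCutoff θ / (1 + Real.cos θ))) :=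
      continuous_iff_continuousAt.2 fun u => (hH2 u).continuousAt
    refine ⟨fun u => c * zonalAmp m poleCutoff u, _, ‖c‖ * (C₁ + C₂ + π), by positivity,
      fun u => (hH u).const_mul c, by fun_prop, ?_, ?_, ?_⟩
    · intro u hu
      rw [norm_mul, mul_div_assoc]
      refine mul_le_mul_of_nonneg_left ((hb₁ u hu).trans ?_) (norm_nonneg _)
      have := Real.pi_pos
      rw [show m + 2 - 1 = m + 1 by omega]
      gcongr
      linarith
    · intro u hu
      rw [norm_mul, norm_mul, norm_neg, Complex.norm_I, one_mul, mul_div_assoc]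
      refine mul_le_mul_of_nonneg_left ((hb₂ u hu).trans ?_) (norm_nonneg _)
      have := Real.pi_pos
      have hpos : 0 < |u| := abs_pos.2 hu
      have e : √|u| ^ (m + 2 + 1) = √|u| ^ (m + 2 - 1) * |u| := by
        rw [show m + 2 - 1 = m + 1 by omega, show m + 2 + 1 = (m + 1) + 2 by ring, pow_add,
          Real.sq_sqrt hpos.le]
      rw [e]
      gcongr
      linarith
    · intro F hF hF0 x
      have h := hc F hF hF0 x
      simp only [show m + 2 - 1 = m + 1 by omega]
      constructor
      · rw [h, ← intervalIntegral.integral_add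
          (Continuous.intervalIntegrable (by fun_prop) _ _)
          (Continuous.intervalIntegrable (by fun_prop) _ _), ← intervalIntegral.integral_const_mul]
        refine intervalIntegral.integral_congr fun r _ => ?_
        rw [intervalIntegral.integral_const_mul, integral_exp_cos_eq m (‖x‖ * r), neg_mul]
        ring
      · intro B hB
        rw [h, intervalIntegral_intervalIntegral_swap, norm_mul]
        · have hBnn : 0 ≤ B := (norm_nonneg _).trans
            (hB ‖x‖ ⟨by linarith [norm_nonneg x], le_rfl⟩)
          have hle : ‖∫ θ in (0 : ℝ)..π, ∫ r in (1 / 4 : ℝ)..4, F r * (r : ℂ) ^ (m + 1) *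
              (Complex.exp (Complex.I * ((‖x‖ * r * Real.cos θ : ℝ) : ℂ)) *
                ((Real.sin θ ^ m : ℝ) : ℂ))‖ ≤ B * |π - 0| := by
            refine intervalIntegral.norm_integral_le_of_norm_le_const fun θ hθ => ?_
            have h1 := hB (‖x‖ * Real.cos θ)
              ⟨by nlinarith [norm_nonneg x, Real.neg_one_le_cos θ],
                by nlinarith [norm_nonneg x, Real.cos_le_one θ]⟩
            have e : ∫ r in (1 / 4 : ℝ)..4, F r * (r : ℂ) ^ (m + 1) *
                (Complex.exp (Complex.I * ((‖x‖ * r * Real.cos θ : ℝ) : ℂ)) *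
                ((Real.sin θ ^ m : ℝ) : ℂ)) = ((Real.sin θ ^ m : ℝ) : ℂ) *
                ∫ r in (1 / 4 : ℝ)..4, Complex.exp (Complex.I * ((‖x‖ * Real.cos θ * r : ℝ) : ℂ)) *
                  (F r * (r : ℂ) ^ (m + 1)) := by
              rw [← intervalIntegral.integral_const_mul]
              refine intervalIntegral.integral_congr fun r _ => ?_
              rw [show ‖x‖ * r * Real.cos θ = ‖x‖ * Real.cos θ * r by ring]
              ring
            rw [e, norm_mul, Complex.norm_real, norm_pow, Real.norm_eq_abs]
            have : |Real.sin θ| ^ m ≤ 1 := pow_le_one₀ (abs_nonneg _) (Real.abs_sin_le_one θ)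
            have h3 : 0 ≤ |Real.sin θ| ^ m := by positivity
            nlinarith [norm_nonneg (∫ r in (1 / 4 : ℝ)..4,
              Complex.exp (Complex.I * ((‖x‖ * Real.cos θ * r : ℝ) : ℂ)) *
                  (F r * (r : ℂ) ^ (m + 1)))]
          have := Real.pi_pos
          rw [sub_zero, abs_of_pos this] at hle
          rw [mul_assoc]
          refine mul_le_mul_of_nonneg_left (hle.trans ?_) (norm_nonneg _)
          nlinarith [mul_nonneg hC₁ hBnn, mul_nonneg hC₂ hBnn]
        · have cc : Continuous (fun p : ℝ × ℝ => F p.1 * (p.1 : ℂ) ^ (m + 1) *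
              (Complex.exp (Complex.I * ((‖x‖ * p.1 * Real.cos p.2 : ℝ) : ℂ)) *
                ((Real.sin p.2 ^ m : ℝ) : ℂ))) := by fun_prop
          exact (cc.continuousOn.integrableOn_compact
            (isCompact_uIcc.prod isCompact_uIcc)).mono_set
            (Set.prod_mono Set.uIoc_subset_uIcc Set.uIoc_subset_uIcc)

/-! ### Nonstationary phase -/

/-- Partial derivative in the last variable. -/
def derivLast {E : Type*} [NormedAddCommGroup E] [NormedSpace ℝ E] (f : E × ℝ → ℝ) (z : E × ℝ) : ℝ :=
  fderiv ℝ f z (0, 1)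

section DerivLast

variable {E : Type*} [NormedAddCommGroup E] [NormedSpace ℝ E] {U : Set (E × ℝ)} {f : E × ℝ → ℝ}

theorem contDiffOn_derivLast (hU : IsOpen U) (hf : ContDiffOn ℝ (⊤ : ℕ∞) f U) :
    ContDiffOn ℝ (⊤ : ℕ∞) (derivLast f) U :=
  (hf.fderiv_of_isOpen hU (by simp)).clm_apply contDiffOn_const

theorem hasDerivAt_derivLast (hU : IsOpen U) (hf : ContDiffOn ℝ (⊤ : ℕ∞) f U) {p : E} {r : ℝ}
    (h : (p, r) ∈ U) : HasDerivAt (fun r => f (p, r)) (derivLast f (p, r)) r := by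
  have h1 : HasFDerivAt f (fderiv ℝ f (p, r)) (p, r) :=
    ((hf.contDiffAt (hU.mem_nhds h)).differentiableAt (by simp)).hasFDerivAt
  exact h1.comp_hasDerivAt r ((hasDerivAt_const r p).prodMk (hasDerivAt_id r))

theorem derivLast_eq_zero (hU : IsOpen U)
    (h0 : ∀ z ∈ U, z.2 ∉ Set.Icc (1 / 2 : ℝ) 2 → f z = 0) :
    ∀ z ∈ U, z.2 ∉ Set.Icc (1 / 2 : ℝ) 2 → derivLast f z = 0 := by
  intro z hz hz2
  have : f =ᶠ[nhds z] fun _ => 0 := by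
    filter_upwards [hU.mem_nhds hz,
      (isClosed_Icc.isOpen_compl.preimage continuous_snd).mem_nhds hz2] with w hw hw2
    exact h0 w hw hw2
  rw [derivLast, this.fderiv_eq]
  simp

theorem integral_exp_eq_integral_by_parts {g g' a b b' : ℝ → ℝ} {T : ℝ} (hT : 0 < T)
    (hg : ∀ r ∈ Set.Icc (1 / 4 : ℝ) 4, HasDerivAt g (g' r) r)
    (hg0 : ∀ r ∈ Set.Icc (1 / 4 : ℝ) 4, g' r ≠ 0)
    (hgc : ContinuousOn g' (Set.Icc (1 / 4) 4))
    (hb : ∀ r ∈ Set.Icc (1 / 4 : ℝ) 4, HasDerivAt b (b' r) r)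
    (hbc : ContinuousOn b' (Set.Icc (1 / 4) 4))
    (hab : ∀ r ∈ Set.Icc (1 / 4 : ℝ) 4, b r = a r / g' r)
    (h1 : b (1 / 4) = 0) (h2 : b 4 = 0) :
    ∫ r in (1 / 4 : ℝ)..4, Complex.exp (Complex.I * ((T * g r : ℝ) : ℂ)) * (a r : ℂ) =
      Complex.I / T *
        ∫ r in (1 / 4 : ℝ)..4, Complex.exp (Complex.I * ((T * g r : ℝ) : ℂ)) * (b' r : ℂ) := by
  have hT' : (T : ℂ) ≠ 0 := by exact_mod_cast hT.ne'
  have huI : Set.uIcc (1 / 4 : ℝ) 4 = Set.Icc (1 / 4) 4 := Set.uIcc_of_le (by norm_num)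
  have gc : ContinuousOn g (Set.Icc (1 / 4) 4) :=
    fun r hr => (hg r hr).continuousAt.continuousWithinAt
  have ec : ContinuousOn (fun r => Complex.exp (Complex.I * ((T * g r : ℝ) : ℂ)))
      (Set.Icc (1 / 4) 4) := by
    have : Continuous fun y : ℝ => Complex.exp (Complex.I * ((T * y : ℝ) : ℂ)) := by fun_prop
    exact this.comp_continuousOn gc
  have ibp := intervalIntegral.integral_mul_deriv_eq_deriv_mul (a := 1 / 4) (b := 4)
    (u := fun r => (b r : ℂ)) (u' := fun r => (b' r : ℂ))
    (v := fun r => Complex.exp (Complex.I * ((T * g r : ℝ) : ℂ)))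
    (fun r hr => (hb r (huI ▸ hr)).ofReal_comp)
    (fun r hr => hasDerivAt_exp_I_mul ((hg r (huI ▸ hr)).const_mul T))
    (ContinuousOn.intervalIntegrable (huI ▸ Complex.continuous_ofReal.comp_continuousOn hbc))
    (ContinuousOn.intervalIntegrable (by
      rw [huI]
      refine ec.mul (continuousOn_const.mul (Complex.continuous_ofReal.comp_continuousOn
        (continuousOn_const.mul hgc)))))
  simp only [h1, h2, Complex.ofReal_zero, zero_mul, sub_zero, zero_sub] at ibp
  have e1 : ∫ r in (1 / 4 : ℝ)..4, Complex.exp (Complex.I * ((T * g r : ℝ) : ℂ)) * (a r : ℂ) =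
      (-Complex.I / T) * ∫ r in (1 / 4 : ℝ)..4, (b r : ℂ) *
        (Complex.exp (Complex.I * ((T * g r : ℝ) : ℂ)) * (Complex.I * ((T * g' r : ℝ) : ℂ))) := by
    rw [← intervalIntegral.integral_const_mul]
    refine intervalIntegral.integral_congr fun r hr => ?_
    rw [huI] at hr
    have hr0 : (g' r : ℂ) ≠ 0 := by exact_mod_cast hg0 r hr
    simp only [hab r hr]
    push_cast
    field_simp
    rw [Complex.I_sq]
    ring
  rw [e1, ibp]
  have : (fun r => (b' r : ℂ) * Complex.exp (Complex.I * ((T * g r : ℝ) : ℂ))) =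
      fun r => Complex.exp (Complex.I * ((T * g r : ℝ) : ℂ)) * (b' r : ℂ) := by
    funext r; ring
  rw [this]
  ring

theorem norm_integral_nonstationary_le (hU : IsOpen U) {K : Set E} (hK : IsCompact K)
    (hKU : K ×ˢ Set.Icc (1 / 4 : ℝ) 4 ⊆ U) {ψ : E × ℝ → ℝ} (hψ : ContDiffOn ℝ (⊤ : ℕ∞) ψ U)
    (hψ' : ∀ z ∈ U, derivLast ψ z ≠ 0) (N : ℕ) :
    ∀ a : E × ℝ → ℝ, ContDiffOn ℝ (⊤ : ℕ∞) a U →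
      (∀ z ∈ U, z.2 ∉ Set.Icc (1 / 2 : ℝ) 2 → a z = 0) →
      ∃ C, 0 ≤ C ∧ ∀ p ∈ K, ∀ T : ℝ, 0 < T →
        ‖∫ r in (1 / 4 : ℝ)..4, Complex.exp (Complex.I * ((T * ψ (p, r) : ℝ) : ℂ)) *
          (a (p, r) : ℂ)‖ ≤ C / T ^ N := by
  induction N with
  | zero =>
    intro a ha _
    obtain ⟨C, hC⟩ := (hK.prod isCompact_Icc).exists_bound_of_continuousOn
      (ha.continuousOn.mono hKU)
    refine ⟨|C| * |4 - 1 / 4|, by positivity, fun p hp T hT => ?_⟩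
    rw [pow_zero, div_one]
    refine intervalIntegral.norm_integral_le_of_norm_le_const fun r hr => ?_
    rw [Set.uIoc_of_le (by norm_num)] at hr
    rw [norm_mul, norm_exp_I_mul_real, one_mul, Complex.norm_real]
    exact (hC (p, r) ⟨hp, hr.1.le, hr.2⟩).trans (le_abs_self C)
  | succ N ih =>
    intro a ha ha0
    have cψ := contDiffOn_derivLast hU hψ
    have cb : ContDiffOn ℝ (⊤ : ℕ∞) (fun z => a z / derivLast ψ z) U := ha.div cψ hψ'
    have b0 : ∀ z ∈ U, z.2 ∉ Set.Icc (1 / 2 : ℝ) 2 → a z / derivLast ψ z = 0 := by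
      intro z hz hz2; rw [ha0 z hz hz2, zero_div]
    have cb' := contDiffOn_derivLast hU cb
    obtain ⟨C, hC, hb⟩ := ih _ cb' (derivLast_eq_zero hU b0)
    refine ⟨C, hC, fun p hp T hT => ?_⟩
    have mem : ∀ r ∈ Set.Icc (1 / 4 : ℝ) 4, (p, r) ∈ U := fun r hr => hKU ⟨hp, hr⟩
    have hc : ∀ f : E × ℝ → ℝ, ContDiffOn ℝ (⊤ : ℕ∞) f U →
        ContinuousOn (fun r => f (p, r)) (Set.Icc (1 / 4) 4) := fun f hf =>
      hf.continuousOn.comp (by fun_prop) mem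
    rw [integral_exp_eq_integral_by_parts (g := fun r => ψ (p, r))
      (g' := fun r => derivLast ψ (p, r)) (a := fun r => a (p, r))
      (b := fun r => a (p, r) / derivLast ψ (p, r)) hT
      (fun r hr => hasDerivAt_derivLast hU hψ (mem r hr)) (fun r hr => hψ' _ (mem r hr))
      (hc _ cψ) (fun r hr => hasDerivAt_derivLast hU cb (mem r hr)) (hc _ cb')
      (fun r _ => rfl) (b0 _ (mem _ (by norm_num)) (by norm_num))
      (b0 _ (mem _ (by norm_num)) (by norm_num)), norm_mul]
    have : ‖Complex.I / (T : ℂ)‖ = 1 / T := by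
      rw [norm_div, Complex.norm_I, Complex.norm_real, Real.norm_of_nonneg hT.le]
    rw [this, pow_succ', show C / (T * T ^ N) = 1 / T * (C / T ^ N) by field_simp]
    exact mul_le_mul_of_nonneg_left (hb p hp T hT) (by positivity)

end DerivLast

/-! ### Kernels with a nondegenerate radial phase -/

theorem amplitude_bounds {d : ℕ} {H H' : ℝ → ℂ} {C M σ r : ℝ} {a a' : ℝ → ℝ} (hC : 0 ≤ C)
    (hM : 0 ≤ M) (hH : ∀ u, HasDerivAt H (H' u) u)
    (hb : ∀ u, u ≠ 0 → ‖H u‖ ≤ C / √|u| ^ d)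
    (hb' : ∀ u, u ≠ 0 → ‖H' u‖ ≤ C / (√|u| ^ d * |u|)) (hσ : σ ≠ 0) (hr : 1 / 4 ≤ r)
    (ha : HasDerivAt a (a' r) r) (ha0 : |a r| ≤ M) (ha1 : |a' r| ≤ M) :
    HasDerivAt (fun r => (a r : ℂ) * H (σ * r))
        ((a' r : ℂ) * H (σ * r) + (a r : ℂ) * ((σ : ℂ) * H' (σ * r))) r ∧
      ‖(a r : ℂ) * H (σ * r)‖ ≤ 5 * M * C * 2 ^ d / √|σ| ^ d ∧
      ‖(a' r : ℂ) * H (σ * r) + (a r : ℂ) * ((σ : ℂ) * H' (σ * r))‖ ≤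
        5 * M * C * 2 ^ d / √|σ| ^ d := by
  have hr0 : 0 < r := by linarith
  have hs : 0 < |σ| := abs_pos.2 hσ
  have hσr : σ * r ≠ 0 := mul_ne_zero hσ hr0.ne'
  have hsq : √|σ| / 2 ≤ √|σ * r| := by
    rw [abs_mul, Real.sqrt_mul hs.le, abs_of_pos hr0]
    have : 1 / 2 ≤ √r := Real.le_sqrt_of_sq_le (by linarith)
    nlinarith [Real.sqrt_nonneg |σ|]
  have hpow : √|σ| ^ d / 2 ^ d ≤ √|σ * r| ^ d := by
    rw [← div_pow]; gcongr
  have hspos : 0 < √|σ| := Real.sqrt_pos.2 hs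
  set Q := C * 2 ^ d / √|σ| ^ d with hQ
  have hQ0 : 0 ≤ Q := by positivity
  have b1 : ‖H (σ * r)‖ ≤ Q := by
    refine (hb _ hσr).trans ?_
    rw [hQ, show C * 2 ^ d / √|σ| ^ d = C / (√|σ| ^ d / 2 ^ d) by field_simp]
    gcongr
  have b2 : ‖(σ : ℂ) * H' (σ * r)‖ ≤ 4 * Q := by
    rw [norm_mul, Complex.norm_real, Real.norm_eq_abs]
    calc |σ| * ‖H' (σ * r)‖ ≤ |σ| * (C / (√|σ * r| ^ d * |σ * r|)) := by
          gcongr; exact hb' _ hσr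
      _ ≤ |σ| * (C / (√|σ| ^ d / 2 ^ d * (|σ| * (1 / 4)))) := by
          have : |σ| * (1 / 4) ≤ |σ * r| := by
            rw [abs_mul, abs_of_pos hr0]; gcongr
          gcongr
      _ = 4 * Q := by rw [hQ]; field_simp
  have e : 5 * M * C * 2 ^ d / √|σ| ^ d = 5 * (M * Q) := by rw [hQ]; ring
  have hMQ : 0 ≤ M * Q := by positivity
  rw [e]
  refine ⟨?_, ?_, ?_⟩
  · have h1 : HasDerivAt (fun r : ℝ => σ * r) σ r := by
      simpa using (hasDerivAt_id r).const_mul σ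
    have h2 := (hH (σ * r)).scomp r h1
    refine (ha.ofReal_comp.mul h2).congr_deriv ?_
    simp
  · rw [norm_mul, Complex.norm_real, Real.norm_eq_abs]
    have := mul_le_mul ha0 b1 (norm_nonneg _) hM
    linarith
  · refine (norm_add_le _ _).trans ?_
    rw [norm_mul, norm_mul (a r : ℂ), Complex.norm_real, Complex.norm_real, Real.norm_eq_abs,
      Real.norm_eq_abs]
    have h1 := mul_le_mul ha1 b1 (norm_nonneg _) hM
    have h2 := mul_le_mul ha0 b2 (norm_nonneg _) hM
    linarith

theorem norm_integral_radial_le {d : ℕ} {H H' : ℝ → ℂ} {C : ℝ} (hC : 0 ≤ C)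
    (hH : ∀ u, HasDerivAt H (H' u) u) (hHc : Continuous H')
    (hb : ∀ u, u ≠ 0 → ‖H u‖ ≤ C / √|u| ^ d)
    (hb' : ∀ u, u ≠ 0 → ‖H' u‖ ≤ C / (√|u| ^ d * |u|))
    {a : ℝ → ℝ} (ha : ContDiff ℝ (⊤ : ℕ∞) a) (ha0 : ∀ r, r ∉ Set.Icc (1 / 2 : ℝ) 2 → a r = 0) :
    ∃ C', 0 ≤ C' ∧ ∀ (φ φ' φ'' : ℝ → ℝ) (μ ε σ : ℝ), 0 < μ → |ε| = 1 → σ ≠ 0 →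
      (∀ r ∈ Set.Icc (1 / 4 : ℝ) 4, HasDerivAt φ (φ' r) r) →
      (∀ r ∈ Set.Icc (1 / 4 : ℝ) 4, HasDerivAt φ' (φ'' r) r) →
      ContinuousOn φ'' (Set.Icc (1 / 4) 4) → (∀ r ∈ Set.Icc (1 / 4 : ℝ) 4, μ ≤ ε * φ'' r) →
      ‖∫ r in (1 / 4 : ℝ)..4, Complex.exp (Complex.I * (φ r : ℂ)) * ((a r : ℂ) * H (σ * r))‖ ≤
        C' / (√|σ| ^ d * √μ) := by
  have hda : ∀ r, HasDerivAt a (deriv a r) r := fun r =>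
    ((ha.differentiable (by simp)) r).hasDerivAt
  have ca' : Continuous (deriv a) := (contDiff_infty_iff_deriv.1 ha).2.continuous
  obtain ⟨M₁, hM₁⟩ := isCompact_Icc.exists_bound_of_continuousOn
    (s := Set.Icc (1 / 4 : ℝ) 4) ha.continuous.continuousOn
  obtain ⟨M₂, hM₂⟩ := isCompact_Icc.exists_bound_of_continuousOn
    (s := Set.Icc (1 / 4 : ℝ) 4) ca'.continuousOn
  have cH : Continuous H := continuous_iff_continuousAt.2 fun u => (hH u).continuousAt
  set M := max |M₁| |M₂|
  have hM : 0 ≤ M := le_max_of_le_left (abs_nonneg _)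
  refine ⟨5 * M * C * 2 ^ d * (2 * π + (4 - 1 / 4) / 2), ?_, ?_⟩
  · have := Real.pi_pos
    have : (0 : ℝ) ≤ 2 * π + (4 - 1 / 4) / 2 := by linarith
    positivity
  intro φ φ' φ'' μ ε σ hμ hε hσ h1 h2 h3 h4
  have key := fun r (hr : r ∈ Set.Icc (1 / 4 : ℝ) 4) =>
    amplitude_bounds hC hM hH hb hb' hσ hr.1 (hda r)
      ((hM₁ r hr).trans ((le_abs_self _).trans (le_max_left _ _)))
      ((hM₂ r hr).trans ((le_abs_self _).trans (le_max_right _ _)))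
  have ac := ha.continuous
  refine (norm_integral_exp_mul_le_of_deriv2 (by norm_num) hμ hε h1 h2 h3 h4
    (fun r hr => (key r hr).1) (Continuous.continuousOn (by fun_prop))
    (fun r hr => (key r hr).2.1) (fun r hr => (key r hr).2.2)
    (by rw [ha0 _ (by norm_num)]; simp) (by rw [ha0 _ (by norm_num)]; simp)).trans (le_of_eq ?_)
  have : √|σ| ≠ 0 := (Real.sqrt_pos.2 (abs_pos.2 hσ)).ne'
  have : √μ ≠ 0 := (Real.sqrt_pos.2 hμ).ne'
  field_simp

theorem isOpen_univ_prod_Ioi {E : Type*} [TopologicalSpace E] :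
    IsOpen ((Set.univ : Set E) ×ˢ Set.Ioi (0 : ℝ)) := isOpen_univ.prod isOpen_Ioi

theorem norm_integral_nonstationary_family {G : ℝ × ℝ → ℝ} {c : ℝ}
    (hG : ContDiffOn ℝ (⊤ : ℕ∞) G (Set.univ ×ˢ Set.Ioi 0)) (hc : 0 < c)
    (hG1 : ∀ p ∈ Set.Icc (0 : ℝ) 1, ∀ r ∈ Set.Icc (1 / 4 : ℝ) 4, c ≤ derivLast G (p, r))
    {a : ℝ → ℝ} (ha : ContDiff ℝ (⊤ : ℕ∞) a) (ha0 : ∀ r, r ∉ Set.Icc (1 / 2 : ℝ) 2 → a r = 0)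
    (N : ℕ) :
    ∃ C, 0 ≤ C ∧ ∀ p ∈ Set.Icc (0 : ℝ) 1, ∀ s ∈ Set.Icc (-(c / 2)) (c / 2), ∀ T : ℝ, 0 < T →
      ‖∫ r in (1 / 4 : ℝ)..4, Complex.exp (Complex.I * ((T * (G (p, r) + s * r) : ℝ) : ℂ)) *
        (a r : ℂ)‖ ≤ C / T ^ N := by
  set V : Set ((ℝ × ℝ) × ℝ) := Set.univ ×ˢ Set.Ioi 0 with hV
  have oV : IsOpen V := isOpen_univ_prod_Ioi
  set ψ : (ℝ × ℝ) × ℝ → ℝ := fun z => G (z.1.1, z.2) + z.1.2 * z.2 with hψdef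
  have hψ : ContDiffOn ℝ (⊤ : ℕ∞) ψ V := by
    refine ContDiffOn.add (hG.comp (ContDiff.contDiffOn (by fun_prop)) ?_)
      (ContDiff.contDiffOn (by fun_prop))
    intro z hz
    exact ⟨trivial, hz.2⟩
  have hd : ∀ p s r : ℝ, 0 < r → derivLast ψ ((p, s), r) = derivLast G (p, r) + s := by
    intro p s r hr
    have h1 := hasDerivAt_derivLast oV hψ (p := (p, s)) (r := r) ⟨trivial, hr⟩
    have h2 := (hasDerivAt_derivLast isOpen_univ_prod_Ioi hG (p := p) (r := r)
      ⟨trivial, hr⟩).add ((hasDerivAt_id r).const_mul s)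
    rw [mul_one] at h2
    exact h1.unique h2
  set U := V ∩ derivLast ψ ⁻¹' {0}ᶜ with hUdef
  have oU : IsOpen U :=
    (contDiffOn_derivLast oV hψ).continuousOn.isOpen_inter_preimage oV isOpen_compl_singleton
  obtain ⟨C, hC, h⟩ := norm_integral_nonstationary_le oU
    (K := Set.Icc (0 : ℝ) 1 ×ˢ Set.Icc (-(c / 2)) (c / 2)) (isCompact_Icc.prod isCompact_Icc) (by
      rintro ⟨⟨p, s⟩, r⟩ ⟨⟨hp, hs⟩, hr⟩
      have hr0 : 0 < r := lt_of_lt_of_le (by norm_num) hr.1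
      refine ⟨⟨trivial, hr0⟩, ?_⟩
      have h1 := hG1 p hp r hr
      have h2 := hs.1
      simp only [Set.mem_preimage, Set.mem_compl_iff, Set.mem_singleton_iff, hd p s r hr0]
      simp only at h2
      linarith) (hψ.mono Set.inter_subset_left) (fun z hz => hz.2) N (fun z => a z.2)
    (ContDiff.contDiffOn (ha.comp contDiff_snd)) (fun z _ hz => ha0 _ hz)
  exact ⟨C, hC, fun p hp s hs T hT => h (p, s) ⟨hp, hs⟩ T hT⟩

theorem exists_kernel_bound (d : ℕ) (hd : 1 ≤ d) {ϱ : ℝ → ℝ} (hϱ : ContDiff ℝ (⊤ : ℕ∞) ϱ)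
    (hϱ0 : ∀ r, r ∉ Set.Icc (1 / 2 : ℝ) 2 → ϱ r = 0) {G : ℝ × ℝ → ℝ}
    (hG : ContDiffOn ℝ (⊤ : ℕ∞) G (Set.univ ×ˢ Set.Ioi 0))
    (hG1 : ∀ p ∈ Set.Icc (0 : ℝ) 1, ∀ r ∈ Set.Icc (1 / 4 : ℝ) 4, 0 < derivLast G (p, r))
    {κ : ℝ → ℝ} {ε : ℝ} (hε : |ε| = 1) (hκ0 : ∀ p ∈ Set.Ioc (0 : ℝ) 1, 0 < κ p ∧ κ p ≤ 1)
    (hκ : ∀ p ∈ Set.Ioc (0 : ℝ) 1, ∀ r ∈ Set.Icc (1 / 4 : ℝ) 4,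
      κ p ≤ ε * derivLast (derivLast G) (p, r)) :
    ∃ C, 0 ≤ C ∧ ∀ p ∈ Set.Ioc (0 : ℝ) 1, ∀ T : ℝ, 0 < T → ∀ Mf : ℝ → ℝ, Continuous Mf →
      (∀ r, 0 < r → Mf r = T * G (p, r)) → ∀ x : Euc d,
      ‖∫ ξ : Euc d, Complex.exp (Complex.I * ((⟪x, ξ⟫ : ℝ) : ℂ)) *
        (Complex.exp (Complex.I * (Mf ‖ξ‖ : ℂ)) * (ϱ ‖ξ‖ : ℂ))‖ ≤ C / (√T ^ d * √(κ p)) := by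
  obtain ⟨H, H', CH, hCH, hH, hHc, hHb, hHb', hrep⟩ := radial_representation d hd
  have oV := isOpen_univ_prod_Ioi (E := ℝ)
  have cG1 := contDiffOn_derivLast oV hG
  have cG2 := contDiffOn_derivLast oV cG1
  have hsub : (Set.Icc (0 : ℝ) 1 ×ˢ Set.Icc (1 / 4 : ℝ) 4) ⊆ Set.univ ×ˢ Set.Ioi (0 : ℝ) :=
    fun z hz => ⟨trivial, lt_of_lt_of_le (by norm_num) hz.2.1⟩
  obtain ⟨c, hc, hc1⟩ : ∃ c, 0 < c ∧
      ∀ p ∈ Set.Icc (0 : ℝ) 1, ∀ r ∈ Set.Icc (1 / 4 : ℝ) 4, c ≤ derivLast G (p, r) := by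
    obtain ⟨z, hz, hmin⟩ := (isCompact_Icc.prod isCompact_Icc).exists_isMinOn
      (s := Set.Icc (0 : ℝ) 1 ×ˢ Set.Icc (1 / 4 : ℝ) 4)
      ⟨(0, 1), by norm_num⟩ (cG1.continuousOn.mono hsub)
    exact ⟨_, hG1 z.1 hz.1 z.2 hz.2, fun p hp r hr => hmin ⟨hp, hr⟩⟩
  set a : ℝ → ℝ := fun r => ϱ r * r ^ (d - 1) with ha
  have ca : ContDiff ℝ (⊤ : ℕ∞) a := hϱ.mul (contDiff_id.pow _)
  have a0 : ∀ r, r ∉ Set.Icc (1 / 2 : ℝ) 2 → a r = 0 := fun r hr => by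
    simp [ha, hϱ0 r hr]
  obtain ⟨C₂, hC₂, hN⟩ := norm_integral_nonstationary_family hG hc hc1 ca a0 d
  obtain ⟨C₃, hC₃, hS⟩ := norm_integral_radial_le hCH hH hHc hHb hHb' ca a0
  set C₁ := ∫ ξ : Euc d, ‖(ϱ ‖ξ‖ : ℂ)‖ with hC₁def
  have hC₁ : 0 ≤ C₁ := integral_nonneg fun _ => norm_nonneg _
  have hsc : 0 < √(c / 2) := Real.sqrt_pos.2 (by linarith)
  refine ⟨C₁ + CH * C₂ + 2 * (C₃ / √(c / 2) ^ (d - 1)), by positivity, ?_⟩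
  intro p hp T hT Mf cMf hMf x
  obtain ⟨hκp, hκ1⟩ := hκ0 p hp
  have hp' : p ∈ Set.Icc (0 : ℝ) 1 := ⟨hp.1.le, hp.2⟩
  have hsκ : 0 < √(κ p) := Real.sqrt_pos.2 hκp
  have hsκ1 : √(κ p) ≤ 1 := Real.sqrt_le_one.2 hκ1
  have hsT : 0 < √T := Real.sqrt_pos.2 hT
  have hsTd : 0 < √T ^ d := pow_pos hsT d
  set F : ℝ → ℂ := fun r => Complex.exp (Complex.I * (Mf r : ℂ)) * (ϱ r : ℂ) with hF
  have ϱc := hϱ.continuous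
  obtain ⟨hr1, hr2⟩ := hrep F (by fun_prop) (fun r hr => by simp [hF, hϱ0 r hr]) x
  have term2 : 0 ≤ CH * C₂ := by positivity
  have term3 : 0 ≤ C₃ / √(c / 2) ^ (d - 1) := by positivity
  rcases le_or_gt T 1 with hT1 | hT1
  · have h1 : ‖∫ ξ : Euc d, Complex.exp (Complex.I * ((⟪x, ξ⟫ : ℝ) : ℂ)) * F ‖ξ‖‖ ≤ C₁ := by
      refine (norm_integral_le_integral_norm _).trans (le_of_eq ?_)
      simp only [hF, norm_mul, norm_exp_I_mul_real, one_mul, hC₁def]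
    refine h1.trans ?_
    rw [le_div_iff₀ (by positivity)]
    have h2 : √T ^ d * √(κ p) ≤ 1 := mul_le_one₀
      (pow_le_one₀ hsT.le (Real.sqrt_le_one.2 hT1)) hsκ.le hsκ1
    nlinarith [mul_le_mul_of_nonneg_left h2 hC₁]
  rcases le_or_gt ‖x‖ (c / 2 * T) with hx | hx
  · have h1 := hr2 (C₂ / T ^ d) (by
      intro σ hσ
      have h := hN p hp' (σ / T) ⟨by rw [le_div_iff₀ hT]; linarith [hσ.1],
        by rw [div_le_iff₀ hT]; linarith [hσ.2]⟩ T hT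
      refine le_trans (le_of_eq (congrArg _ ?_)) h
      refine intervalIntegral.integral_congr fun r hr => ?_
      rw [Set.uIcc_of_le (by norm_num)] at hr
      have hr0 : 0 < r := lt_of_lt_of_le (by norm_num) hr.1
      simp only [hF, hMf r hr0, ha]
      rw [show T * (G (p, r) + σ / T * r) = σ * r + T * G (p, r) by field_simp; ring]
      push_cast
      rw [mul_add, Complex.exp_add]
      ring)
    refine h1.trans ?_
    have h2 : √T ^ d * √(κ p) ≤ T ^ d := by
      have : √T ≤ T := Real.sqrt_le_iff.2 ⟨hT.le, by nlinarith⟩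
      calc √T ^ d * √(κ p) ≤ T ^ d * 1 := by gcongr
        _ = _ := mul_one _
    rw [← mul_div_assoc]
    exact div_le_div₀ (by linarith) (by linarith) (by positivity) h2
  · have hx0 : 0 < ‖x‖ := lt_trans (by positivity) hx
    have J : ∀ σ : ℝ, |σ| = ‖x‖ → ‖∫ r in (1 / 4 : ℝ)..4,
        Complex.exp (Complex.I * ((σ * r : ℝ) : ℂ)) * (F r * (r : ℂ) ^ (d - 1) * H (σ * r))‖ ≤
        C₃ / √(c / 2) ^ (d - 1) / (√T ^ d * √(κ p)) := by
      intro σ hσ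
      have mem : ∀ r ∈ Set.Icc (1 / 4 : ℝ) 4, (p, r) ∈ (Set.univ : Set ℝ) ×ˢ Set.Ioi (0 : ℝ) :=
        fun r hr => hsub ⟨hp', hr⟩
      have h := hS (fun r => T * G (p, r) + σ * r) (fun r => T * derivLast G (p, r) + σ)
        (fun r => T * derivLast (derivLast G) (p, r)) (T * κ p) ε σ (by positivity) hε
        (by rintro rfl; simp at hσ; exact hx0.ne hσ)
        (fun r hr => (((hasDerivAt_derivLast oV hG (mem r hr)).const_mul T).add
          ((hasDerivAt_id r).const_mul σ)).congr_deriv (by rw [mul_one]))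
        (fun r hr => ((hasDerivAt_derivLast oV cG1 (mem r hr)).const_mul T).add_const σ)
        (continuousOn_const.mul (cG2.continuousOn.comp (by fun_prop) mem))
        (fun r hr => by nlinarith [hκ p hp r hr])
      have e : ∫ r in (1 / 4 : ℝ)..4,
          Complex.exp (Complex.I * ((σ * r : ℝ) : ℂ)) * (F r * (r : ℂ) ^ (d - 1) * H (σ * r)) =
          ∫ r in (1 / 4 : ℝ)..4, Complex.exp (Complex.I * ((T * G (p, r) + σ * r : ℝ) : ℂ)) *
            ((a r : ℂ) * H (σ * r)) := by
        refine intervalIntegral.integral_congr fun r hr => ?_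
        rw [Set.uIcc_of_le (by norm_num)] at hr
        have hr0 : 0 < r := lt_of_lt_of_le (by norm_num) hr.1
        simp only [hF, hMf r hr0, ha]
        push_cast
        rw [mul_add, Complex.exp_add]
        ring
      rw [e]
      refine h.trans ?_
      have hsx : √(c / 2) * √T ≤ √|σ| := by
        rw [hσ, ← Real.sqrt_mul (by linarith)]
        exact Real.sqrt_le_sqrt hx.le
      have hpd : √T ^ d = √T ^ (d - 1) * √T := by
        rw [← pow_succ, Nat.sub_add_cancel hd]
      rw [div_div, Real.sqrt_mul hT.le, hpd]
      refine div_le_div_of_nonneg_left hC₃ (by positivity) ?_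
      calc √(c / 2) ^ (d - 1) * (√T ^ (d - 1) * √T * √(κ p))
          = (√(c / 2) * √T) ^ (d - 1) * (√T * √(κ p)) := by rw [mul_pow]; ring
        _ ≤ _ := by gcongr
    rw [hr1]
    refine (norm_add_le _ _).trans ?_
    have j1 := J ‖x‖ (abs_of_nonneg (norm_nonneg x))
    have j2 := J (-‖x‖) (by simp)
    refine (add_le_add j1 j2).trans ?_
    rw [← add_div]
    exact div_le_div_of_nonneg_right (by linarith) (by positivity)

/-! ### Derivatives of the symbol -/

theorem hasDerivAt_tanh (y : ℝ) : HasDerivAt Real.tanh (1 - Real.tanh y ^ 2) y := by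
  have hc := (Real.cosh_pos y).ne'
  have h := (Real.hasDerivAt_sinh y).div (Real.hasDerivAt_cosh y) hc
  have e : Real.tanh = Real.sinh / Real.cosh := by
    funext z; simp [Real.tanh_eq_sinh_div_cosh]
  rw [e]
  refine h.congr_deriv ?_
  simp only [Pi.div_apply]
  field_simp

theorem one_sub_tanh_sq (y : ℝ) : 1 - Real.tanh y ^ 2 = 1 / Real.cosh y ^ 2 := by
  have hc := (Real.cosh_pos y).ne'
  rw [Real.tanh_eq_sinh_div_cosh]
  field_simp
  linarith [Real.cosh_sq y]

theorem one_sub_tanh_sq_pos (y : ℝ) : 0 < 1 - Real.tanh y ^ 2 := by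
  rw [one_sub_tanh_sq]
  have := Real.cosh_pos y
  positivity

theorem tanh_pos_of_pos {y : ℝ} (hy : 0 < y) : 0 < Real.tanh y := by
  rw [Real.tanh_eq_sinh_div_cosh]
  exact div_pos (Real.sinh_pos_iff.2 hy) (Real.cosh_pos y)

theorem tanh_le_self_of_nonneg {y : ℝ} (hy : 0 ≤ y) : Real.tanh y ≤ y := by
  have hd : ∀ z : ℝ, HasDerivAt (fun z => z - Real.tanh z) (Real.tanh z ^ 2) z := fun z =>
    ((hasDerivAt_id z).sub (hasDerivAt_tanh z)).congr_deriv (by ring)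
  have hm : Monotone fun z : ℝ => z - Real.tanh z :=
    monotone_of_deriv_nonneg (fun z => (hd z).differentiableAt)
      (fun z => by rw [(hd z).deriv]; positivity)
  have := hm hy
  simp only [Real.tanh_zero, sub_zero] at this
  linarith

theorem mul_one_sub_tanh_sq_le {y : ℝ} (hy : 0 ≤ y) : y * (1 - Real.tanh y ^ 2) ≤ Real.tanh y := by
  have hc := Real.cosh_pos y
  rw [one_sub_tanh_sq, Real.tanh_eq_sinh_div_cosh, mul_one_div, div_le_div_iff₀ (by positivity) hc]
  have h := (Real.self_le_sinh_iff (x := 2 * y)).2 (by linarith)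
  rw [Real.sinh_two_mul] at h
  nlinarith

theorem one_sub_tanh_sq_mul_le (y : ℝ) :
    (1 - Real.tanh y ^ 2) * (3 + 3 * y ^ 2 + (y ^ 2) ^ 2) ≤ 3 := by
  have hc := Real.cosh_pos y
  have h := sum_le_hasSum (Finset.range 3) (fun n _ => by rw [pow_mul]; positivity)
    (Real.hasSum_cosh (2 * y))
  simp only [Finset.sum_range_succ, Finset.sum_range_zero, Nat.factorial] at h
  norm_num at h
  rw [Real.cosh_two_mul] at h
  have h2 := Real.cosh_sq y
  rw [one_sub_tanh_sq, one_div_mul_eq_div, div_le_iff₀ (by positivity)]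
  nlinarith

theorem one_sub_tanh_sq_antitone {y z : ℝ} (hy : 0 ≤ y) (h : y ≤ z) :
    1 - Real.tanh z ^ 2 ≤ 1 - Real.tanh y ^ 2 := by
  rw [one_sub_tanh_sq, one_sub_tanh_sq]
  have := Real.cosh_pos y
  have : Real.cosh y ≤ Real.cosh z := Real.cosh_le_cosh.2 (by
    rw [abs_of_nonneg hy, abs_of_nonneg (hy.trans h)]; exact h)
  gcongr

theorem hasDerivAt_sqrt_comp {f f₁ f₂ : ℝ → ℝ} {y : ℝ} (hf : HasDerivAt f (f₁ y) y)
    (hf₁ : HasDerivAt f₁ (f₂ y) y) (h0 : 0 < f y) :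
    HasDerivAt (fun y => √(f y)) (f₁ y / (2 * √(f y))) y ∧
      HasDerivAt (fun y => f₁ y / (2 * √(f y)))
        ((2 * f y * f₂ y - f₁ y ^ 2) / (4 * (f y * √(f y)))) y := by
  have h1 := hf.sqrt h0.ne'
  have hs : √(f y) ≠ 0 := (Real.sqrt_pos.2 h0).ne'
  refine ⟨h1, (hf₁.div (h1.const_mul 2) (by positivity)).congr_deriv ?_⟩
  have h2 : f y = √(f y) ^ 2 := (Real.sq_sqrt h0.le).symm
  have h3 : f y ≠ 0 := h0.ne'
  field_simp
  rw [Real.sq_sqrt h0.le]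
  ring

/-- The square of the symbol `m_β`. -/
def symbSq (β y : ℝ) : ℝ := y * (1 + β * y ^ 2) * Real.tanh y

/-- First derivative of `symbSq`. -/
def symbSq₁ (β y : ℝ) : ℝ :=
  (1 + 3 * β * y ^ 2) * Real.tanh y + y * (1 + β * y ^ 2) * (1 - Real.tanh y ^ 2)

/-- Second derivative of `symbSq`. -/
def symbSq₂ (β y : ℝ) : ℝ :=
  6 * β * y * Real.tanh y + 2 * (1 + 3 * β * y ^ 2) * (1 - Real.tanh y ^ 2) -
    2 * y * (1 + β * y ^ 2) * Real.tanh y * (1 - Real.tanh y ^ 2)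

/-- Formula for the first derivative of `m_β`. -/
def mSymb₁ (β y : ℝ) : ℝ := symbSq₁ β y / (2 * √(symbSq β y))

/-- Formula for the second derivative of `m_β`. -/
def mSymb₂ (β y : ℝ) : ℝ :=
  (2 * symbSq β y * symbSq₂ β y - symbSq₁ β y ^ 2) / (4 * (symbSq β y * √(symbSq β y)))

theorem hasDerivAt_symbSq (β y : ℝ) : HasDerivAt (symbSq β) (symbSq₁ β y) y := by
  have h1 : HasDerivAt (fun y : ℝ => y * (1 + β * y ^ 2)) (1 + 3 * β * y ^ 2) y :=
    ((hasDerivAt_id y).mul (((hasDerivAt_pow 2 y).const_mul β).const_add 1)).congr_deriv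
      (by simp; ring)
  exact h1.mul (hasDerivAt_tanh y)

theorem hasDerivAt_symbSq₁ (β y : ℝ) : HasDerivAt (symbSq₁ β) (symbSq₂ β y) y := by
  have h1 : HasDerivAt (fun y : ℝ => y * (1 + β * y ^ 2)) (1 + 3 * β * y ^ 2) y :=
    ((hasDerivAt_id y).mul (((hasDerivAt_pow 2 y).const_mul β).const_add 1)).congr_deriv
      (by simp; ring)
  have h2 : HasDerivAt (fun y : ℝ => 1 + 3 * β * y ^ 2) (6 * β * y) y :=
    (((hasDerivAt_pow 2 y).const_mul (3 * β)).const_add 1).congr_deriv (by simp; ring)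
  have h3 : HasDerivAt (fun y : ℝ => 1 - Real.tanh y ^ 2)
      (-(2 * Real.tanh y * (1 - Real.tanh y ^ 2))) y :=
    (((hasDerivAt_tanh y).pow 2).const_sub 1).congr_deriv (by simp)
  refine ((h2.mul (hasDerivAt_tanh y)).add (h1.mul h3)).congr_deriv ?_
  unfold symbSq₂
  ring

theorem symbSq_pos {β y : ℝ} (hβ : 0 ≤ β) (hy : 0 < y) : 0 < symbSq β y := by
  have := tanh_pos_of_pos hy
  unfold symbSq
  positivity

theorem hasDerivAt_mSymb {β y : ℝ} (hβ : 0 ≤ β) (hy : 0 < y) :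
    HasDerivAt (mSymb β) (mSymb₁ β y) y ∧ HasDerivAt (mSymb₁ β) (mSymb₂ β y) y :=
  hasDerivAt_sqrt_comp (hasDerivAt_symbSq β y) (hasDerivAt_symbSq₁ β y) (symbSq_pos hβ hy)

theorem mSymb₁_pos {β y : ℝ} (hβ : 0 ≤ β) (hy : 0 < y) : 0 < mSymb₁ β y := by
  have h1 := tanh_pos_of_pos hy
  have h2 := one_sub_tanh_sq_pos y
  have h3 := Real.sqrt_pos.2 (symbSq_pos hβ hy)
  unfold mSymb₁
  refine div_pos ?_ (by positivity)
  unfold symbSq₁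
  positivity

theorem curvature_zero_ge (y : ℝ) :
    4 * (1 - Real.tanh y ^ 2) * (y ^ 2 * Real.tanh y ^ 2) ≤
      -(2 * symbSq 0 y * symbSq₂ 0 y - symbSq₁ 0 y ^ 2) := by
  unfold symbSq symbSq₁ symbSq₂
  nlinarith [sq_nonneg (Real.tanh y - y * (1 - Real.tanh y ^ 2))]

theorem curvature_one_ge {y : ℝ} (hy : 0 < y) :
    1 / 7 * (y ^ 2 * Real.tanh y ^ 2) ≤ 2 * symbSq 1 y * symbSq₂ 1 y - symbSq₁ 1 y ^ 2 := by
  have hT := tanh_pos_of_pos hy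
  have hS := one_sub_tanh_sq_pos y
  have hTy := tanh_le_self_of_nonneg hy.le
  have hyS := mul_one_sub_tanh_sq_le hy.le
  have hw := one_sub_tanh_sq_mul_le y
  set T := Real.tanh y with hTdef
  set S := 1 - T ^ 2 with hSdef
  set u := y ^ 2 with hu
  have hu0 : 0 < u := by positivity
  have e : 2 * symbSq 1 y * symbSq₂ 1 y - symbSq₁ 1 y ^ 2 =
      -((1 + 3 * u) * T - (1 + u) * (y * S)) ^ 2 + 4 * u * (1 + u) * T ^ 2 * (3 - (1 + u) * S) := by
    unfold symbSq symbSq₁ symbSq₂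
    rw [← hTdef, ← hSdef, hu]
    ring
  set q := (1 + 3 * u) * T - (1 + u) * (y * S) with hq
  have hq0 : 0 ≤ q := by nlinarith
  set w := 3 + 3 * u + u ^ 2 with hwdef
  have hw0 : 0 < w := by positivity
  have hmain : 4 * u * (1 + u) * T ^ 2 * (3 * w - (1 + u) * 3) ≤
      4 * u * (1 + u) * T ^ 2 * (3 - (1 + u) * S) * w := by
    have : 3 * w - (1 + u) * 3 ≤ (3 - (1 + u) * S) * w := by nlinarith
    rw [mul_assoc _ _ w]
    exact mul_le_mul_of_nonneg_left this (by positivity)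
  have hred : ∀ Q : ℝ, q ≤ T * Q → 1 / 7 * u * w + Q ^ 2 * w ≤
      4 * u * (1 + u) * (3 * w - (1 + u) * 3) →
      1 / 7 * (u * T ^ 2) ≤ -q ^ 2 + 4 * u * (1 + u) * T ^ 2 * (3 - (1 + u) * S) := by
    intro Q hQ h
    have h1 : q ^ 2 ≤ (T * Q) ^ 2 := by gcongr
    have h2 := mul_le_mul_of_nonneg_left h (sq_nonneg T)
    have h3 := mul_le_mul_of_nonneg_right h1 hw0.le
    refine le_of_mul_le_mul_right ?_ hw0
    nlinarith
  rw [e]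
  rcases le_or_gt u 1 with hu1 | hu1
  · apply hred (3 * u + u ^ 2)
    · have hTu : T ^ 2 ≤ u := by rw [hu]; gcongr
      have h1 : T * (1 - u) ≤ y * S := by
        have : 1 - u ≤ S := by rw [hSdef]; linarith
        exact mul_le_mul hTy this (by linarith) hy.le
      rw [hq]
      nlinarith
    · have h2 : u ^ 2 ≤ 1 := pow_le_one₀ hu0.le hu1
      have h3 : u ^ 3 ≤ 1 := pow_le_one₀ hu0.le hu1
      have h4 : u ^ 4 ≤ 1 := pow_le_one₀ hu0.le hu1
      have h5 : u ^ 5 ≤ 1 := pow_le_one₀ hu0.le hu1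
      have h6 : 4 * u * (1 + u) * (3 * w - (1 + u) * 3) - (1 / 7 * u * w + (3 * u + u ^ 2) ^ 2 * w) =
          u * (165 / 7 + 144 / 7 * u - 64 / 7 * u ^ 2 - 18 * u ^ 3 - 9 * u ^ 4 - u ^ 5) := by
        rw [hwdef]; ring
      have h7 : 0 ≤ 165 / 7 + 144 / 7 * u - 64 / 7 * u ^ 2 - 18 * u ^ 3 - 9 * u ^ 4 - u ^ 5 := by
        nlinarith
      linarith [mul_nonneg hu0.le h7]
  · apply hred (1 + 3 * u)
    · rw [hq]
      have : 0 < (1 + u) * (y * S) := by positivity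
      linarith
    · have h2 : 1 ≤ u ^ 2 := one_le_pow₀ hu1.le
      have h3 : 0 ≤ u ^ 3 := by positivity
      have h4 : 0 ≤ u ^ 4 := by positivity
      have h6 : 4 * u * (1 + u) * (3 * w - (1 + u) * 3) - (1 / 7 * u * w + (1 + 3 * u) ^ 2 * w) =
          -3 + 18 / 7 * u + 11 / 7 * u ^ 2 + 20 / 7 * u ^ 3 + 3 * u ^ 4 := by
        rw [hwdef]; ring
      linarith

theorem curvature_ge {β ε : ℝ} (h : (β = 0 ∧ ε = -1) ∨ (β = 1 ∧ ε = 1)) {y : ℝ} (hy : 0 < y) :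
    1 / 7 * (1 - Real.tanh y ^ 2) * (y ^ 2 * Real.tanh y ^ 2) ≤
      ε * (2 * symbSq β y * symbSq₂ β y - symbSq₁ β y ^ 2) := by
  have hS := one_sub_tanh_sq_pos y
  have h0 : 0 ≤ y ^ 2 * Real.tanh y ^ 2 := by positivity
  rcases h with ⟨rfl, rfl⟩ | ⟨rfl, rfl⟩
  · have := curvature_zero_ge y
    nlinarith [mul_nonneg hS.le h0]
  · have := curvature_one_ge hy
    nlinarith [mul_nonneg (sq_nonneg (Real.tanh y)) h0]

theorem mul_mSymb₂_pos {β ε : ℝ} (h : (β = 0 ∧ ε = -1) ∨ (β = 1 ∧ ε = 1)) {y : ℝ} (hy : 0 < y) :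
    0 < ε * mSymb₂ β y := by
  have hβ : 0 ≤ β := by rcases h with h | h <;> simp [h.1]
  have h1 := curvature_ge h hy
  have hS := one_sub_tanh_sq_pos y
  have hT := tanh_pos_of_pos hy
  have hf := symbSq_pos hβ hy
  have hs := Real.sqrt_pos.2 hf
  unfold mSymb₂
  rw [← mul_div_assoc]
  exact div_pos (lt_of_lt_of_le (by positivity) h1) (by positivity)

theorem exists_le_mul_mSymb₂ {β ε : ℝ} (h : (β = 0 ∧ ε = -1) ∨ (β = 1 ∧ ε = 1)) :
    ∃ c, 0 < c ∧ c ≤ 1 ∧ ∀ y, 0 < y → y ≤ 4 → c * y ≤ ε * mSymb₂ β y := by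
  have hβ : 0 ≤ β ∧ β ≤ 1 := by rcases h with h | h <;> simp [h.1]
  have hS4 := one_sub_tanh_sq_pos 4
  set s := 1 - Real.tanh 4 ^ 2 with hs
  have hs1 : s ≤ 1 := by rw [hs]; nlinarith [sq_nonneg (Real.tanh 4)]
  refine ⟨1 / 7 * s ^ 3 / (4 * 17 ^ 2), by positivity, ?_, ?_⟩
  · have : s ^ 3 ≤ 1 := pow_le_one₀ hS4.le hs1
    rw [div_le_one (by positivity)]
    linarith
  intro y hy hy4
  have h1 := curvature_ge h hy
  have hS := one_sub_tanh_sq_pos y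
  have hsS : s ≤ 1 - Real.tanh y ^ 2 := one_sub_tanh_sq_antitone hy.le hy4
  have hT := tanh_pos_of_pos hy
  have hTy := tanh_le_self_of_nonneg hy.le
  have hyS := mul_one_sub_tanh_sq_le hy.le
  have hf := symbSq_pos hβ.1 hy
  have hfs := Real.sqrt_pos.2 hf
  have hfle : symbSq β y ≤ 17 * y ^ 2 := by
    unfold symbSq
    have h2 : 1 + β * y ^ 2 ≤ 17 := by nlinarith [sq_nonneg y, mul_nonneg hβ.1 (sq_nonneg y)]
    have h3 : 0 ≤ 1 + β * y ^ 2 := by nlinarith [mul_nonneg hβ.1 (sq_nonneg y)]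
    calc y * (1 + β * y ^ 2) * Real.tanh y ≤ y * 17 * y := by gcongr
      _ = _ := by ring
  have hsf : √(symbSq β y) ≤ 17 * y := by
    apply Real.sqrt_le_iff.2
    constructor
    · positivity
    · nlinarith
  have hTs : s * y ≤ Real.tanh y := by nlinarith
  have hnum : 1 / 7 * s * (y ^ 2 * (s * y) ^ 2) ≤
      ε * (2 * symbSq β y * symbSq₂ β y - symbSq₁ β y ^ 2) := by
    refine le_trans ?_ h1
    gcongr
  unfold mSymb₂
  rw [← mul_div_assoc]
  calc 1 / 7 * s ^ 3 / (4 * 17 ^ 2) * y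
      = 1 / 7 * s * (y ^ 2 * (s * y) ^ 2) / (4 * (17 * y ^ 2 * (17 * y))) := by
        field_simp
    _ ≤ _ := div_le_div₀ (le_trans (by positivity) hnum) hnum (by positivity) (by gcongr)

/-! ### Low and high frequencies -/

theorem derivLast_eq_of_hasDerivAt {G : ℝ × ℝ → ℝ}
    (hG : ContDiffOn ℝ (⊤ : ℕ∞) G (Set.univ ×ˢ Set.Ioi 0)) {p : ℝ} {g g₁ : ℝ → ℝ}
    (hg : ∀ r, 0 < r → G (p, r) = g r) (hg₁ : ∀ r, 0 < r → HasDerivAt g (g₁ r) r) :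
    ∀ r, 0 < r → derivLast G (p, r) = g₁ r := by
  intro r hr
  refine (hasDerivAt_derivLast isOpen_univ_prod_Ioi hG ⟨trivial, hr⟩).unique
    ((hg₁ r hr).congr_of_eventuallyEq ?_)
  filter_upwards [isOpen_Ioi.mem_nhds hr] with z hz using hg z hz

theorem derivLast_of_eq_mSymb {β : ℝ} (hβ : 0 ≤ β) {G : ℝ × ℝ → ℝ}
    (hG : ContDiffOn ℝ (⊤ : ℕ∞) G (Set.univ ×ˢ Set.Ioi 0)) {p A b : ℝ} (hb : 0 < b)
    (h : ∀ r, 0 < r → G (p, r) = A * mSymb β (b * r)) :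
    ∀ r, 0 < r → derivLast G (p, r) = A * b * mSymb₁ β (b * r) ∧
      derivLast (derivLast G) (p, r) = A * b ^ 2 * mSymb₂ β (b * r) := by
  have hl : ∀ r : ℝ, HasDerivAt (fun r => b * r) b r := fun r => by
    simpa using (hasDerivAt_id r).const_mul b
  have h1 := derivLast_eq_of_hasDerivAt hG h (g₁ := fun r => A * b * mSymb₁ β (b * r))
    (fun r hr => (((hasDerivAt_mSymb hβ (mul_pos hb hr)).1.comp r (hl r)).const_mul A).congr_deriv
      (by ring))
  have h2 := derivLast_eq_of_hasDerivAt (contDiffOn_derivLast isOpen_univ_prod_Ioi hG) h1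
    (g₁ := fun r => A * b ^ 2 * mSymb₂ β (b * r))
    (fun r hr => (((hasDerivAt_mSymb hβ (mul_pos hb hr)).2.comp r
      (hl r)).const_mul (A * b)).congr_deriv (by ring))
  exact fun r hr => ⟨h1 r hr, h2 r hr⟩

theorem contDiff_tanh : ContDiff ℝ (⊤ : ℕ∞) Real.tanh := by
  have e : Real.tanh = fun z => Real.sinh z / Real.cosh z := by
    funext z; exact Real.tanh_eq_sinh_div_cosh z
  rw [e]
  exact Real.contDiff_sinh.div Real.contDiff_cosh fun z => (Real.cosh_pos z).ne'

theorem continuous_mSymb (β : ℝ) : Continuous (mSymb β) := by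
  have := contDiff_tanh.continuous
  unfold mSymb
  fun_prop

/-- The smooth function `tanh y / y`. -/
def tanhQuot : ℝ → ℝ := dslope Real.tanh 0

theorem mul_tanhQuot (y : ℝ) : y * tanhQuot y = Real.tanh y := by
  have := sub_smul_dslope Real.tanh 0 y
  simpa [tanhQuot] using this

theorem contDiff_tanhQuot : ContDiff ℝ (⊤ : ℕ∞) tanhQuot := by
  rw [contDiff_iff_contDiffAt]
  intro y
  by_cases hy : y = 0
  · subst hy
    have ha : AnalyticAt ℝ Real.tanh 0 := by
      have e : Real.tanh = fun z => Real.sinh z / Real.cosh z := by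
        funext z; exact Real.tanh_eq_sinh_div_cosh z
      rw [e]
      exact Real.analyticAt_sinh.div Real.analyticAt_cosh (Real.cosh_pos 0).ne'
    obtain ⟨q, hq⟩ := ha
    exact hq.has_fpower_series_dslope_fslope.analyticAt.contDiffAt
  · have : tanhQuot =ᶠ[nhds y] fun z => Real.tanh z / z := by
      filter_upwards [isOpen_ne.mem_nhds hy] with z hz
      rw [eq_div_iff hz, mul_comm, mul_tanhQuot]
    exact (contDiff_tanh.contDiffAt.div contDiffAt_id hy).congr_of_eventuallyEq this

theorem tanhQuot_zero : tanhQuot 0 = 1 := by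
  rw [tanhQuot, dslope_same, (hasDerivAt_tanh 0).deriv]
  simp

theorem tanhQuot_pos (y : ℝ) : 0 < tanhQuot y := by
  have h := mul_tanhQuot y
  rcases lt_trichotomy y 0 with hy | hy | hy
  · have h1 := tanh_pos_of_pos (neg_pos.2 hy)
    rw [Real.tanh_neg] at h1
    by_contra h2
    nlinarith [mul_nonneg_of_nonpos_of_nonpos hy.le (not_lt.1 h2)]
  · rw [hy, tanhQuot_zero]; exact one_pos
  · have h1 := tanh_pos_of_pos hy
    by_contra h2
    nlinarith [mul_nonneg hy.le (neg_nonneg.2 (not_lt.1 h2))]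

/-- The rescaled phase `m_β(pr)/p`, smooth up to `p = 0`. -/
def lowPhase (β : ℝ) (z : ℝ × ℝ) : ℝ :=
  z.2 * √((1 + β * (z.1 * z.2) ^ 2) * tanhQuot (z.1 * z.2))

theorem contDiff_lowPhase {β : ℝ} (hβ : 0 ≤ β) : ContDiff ℝ (⊤ : ℕ∞) (lowPhase β) := by
  have hq : ContDiff ℝ (⊤ : ℕ∞) fun z : ℝ × ℝ => tanhQuot (z.1 * z.2) :=
    contDiff_tanhQuot.comp (contDiff_fst.mul contDiff_snd)
  refine contDiff_snd.mul (ContDiff.sqrt (ContDiff.mul (by fun_prop) hq) fun z => ?_)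
  have := tanhQuot_pos (z.1 * z.2)
  positivity

theorem lowPhase_eq (β : ℝ) {p r : ℝ} (hp : 0 < p) (hr : 0 < r) :
    lowPhase β (p, r) = 1 / p * mSymb β (p * r) := by
  have h : p * r * (1 + β * (p * r) ^ 2) * Real.tanh (p * r) =
      (p * r) ^ 2 * ((1 + β * (p * r) ^ 2) * tanhQuot (p * r)) := by
    rw [← mul_tanhQuot (p * r)]; ring
  simp only [lowPhase, mSymb]
  rw [h, Real.sqrt_mul (sq_nonneg _), Real.sqrt_sq (by positivity)]
  field_simp

theorem norm_kernel_low_le (d : ℕ) (hd : 1 ≤ d) {β : ℝ} (hβ : β = 0 ∨ β = 1) {ϱ : ℝ → ℝ}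
    (hϱ : ContDiff ℝ (⊤ : ℕ∞) ϱ) (hϱ0 : ∀ r, r ∉ Set.Icc (1 / 2 : ℝ) 2 → ϱ r = 0) :
    ∃ C, 0 ≤ C ∧ ∀ p ∈ Set.Ioc (0 : ℝ) 1, ∀ t : ℝ, 0 < t → ∀ x : Euc d,
      ‖∫ ξ : Euc d, Complex.exp (Complex.I * ((⟪x, ξ⟫ : ℝ) : ℂ)) *
        (Complex.exp (Complex.I * ((t * mSymb β (p * ‖ξ‖) : ℝ) : ℂ)) * (ϱ ‖ξ‖ : ℂ))‖ ≤
        C / (√(t * p) ^ d * p) := by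
  obtain ⟨ε, hε⟩ : ∃ ε : ℝ, (β = 0 ∧ ε = -1) ∨ (β = 1 ∧ ε = 1) := by
    rcases hβ with h | h
    · exact ⟨-1, Or.inl ⟨h, rfl⟩⟩
    · exact ⟨1, Or.inr ⟨h, rfl⟩⟩
  have hβ0 : 0 ≤ β := by rcases hβ with h | h <;> simp [h]
  have hε1 : |ε| = 1 := by rcases hε with h | h <;> simp [h.2]
  have hG : ContDiffOn ℝ (⊤ : ℕ∞) (lowPhase β) (Set.univ ×ˢ Set.Ioi 0) :=
    (contDiff_lowPhase hβ0).contDiffOn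
  obtain ⟨c, hc, hc1, hcm⟩ := exists_le_mul_mSymb₂ hε
  have hder := fun (p : ℝ) (hp : 0 < p) =>
    derivLast_of_eq_mSymb hβ0 hG (A := 1 / p) hp fun r hr => lowPhase_eq β hp hr
  obtain ⟨C, hC, h⟩ := exists_kernel_bound d hd hϱ hϱ0 hG
    (by
      intro p hp r hr
      have hr0 : 0 < r := lt_of_lt_of_le (by norm_num) hr.1
      rcases hp.1.eq_or_lt with h0 | h0
      · have := derivLast_eq_of_hasDerivAt hG (p := 0) (g := fun r => r) (g₁ := fun _ => 1)
          (fun r _ => by simp [lowPhase, tanhQuot_zero]) (fun r _ => hasDerivAt_id r) r hr0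
        rw [← h0, this]
        exact one_pos
      · rw [(hder p h0 r hr0).1]
        have := mSymb₁_pos hβ0 (mul_pos h0 hr0)
        positivity)
    (κ := fun p => c / 4 * p ^ 2) hε1
    (by
      intro p hp
      have := hp.1
      refine ⟨by positivity, ?_⟩
      have : p ^ 2 ≤ 1 := pow_le_one₀ hp.1.le hp.2
      nlinarith)
    (by
      intro p hp r hr
      have hp0 := hp.1
      have hr0 : 0 < r := lt_of_lt_of_le (by norm_num) hr.1
      rw [(hder p hp0 r hr0).2]
      have h1 := hcm (p * r) (mul_pos hp0 hr0) (by nlinarith [hp.2, hr.2])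
      have h2 : ε * (1 / p * p ^ 2 * mSymb₂ β (p * r)) = p * (ε * mSymb₂ β (p * r)) := by
        field_simp
      rw [h2]
      have h3 := mul_le_mul_of_nonneg_left h1 hp0.le
      refine le_trans ?_ h3
      have h4 := mul_le_mul_of_nonneg_left hr.1 (by positivity : 0 ≤ c * p ^ 2)
      nlinarith)
  refine ⟨C / √(c / 4), by positivity, fun p hp t ht x => ?_⟩
  have hp0 := hp.1
  have cm := continuous_mSymb β
  refine (h p hp (t * p) (by positivity) (fun r => t * mSymb β (p * r)) (by fun_prop)
    (fun r hr => by rw [lowPhase_eq β hp0 hr]; field_simp) x).trans (le_of_eq ?_)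
  rw [Real.sqrt_mul (x := c / 4) (by positivity) (p ^ 2), Real.sqrt_sq hp0.le, div_div]
  congr 1
  ring

/-- A smooth extension of `tanh (r/p)` to `p ≤ 0`. -/
def tanhInv (z : ℝ × ℝ) : ℝ :=
  (1 - expNegInvGlue (z.1 / (2 * z.2))) / (1 + expNegInvGlue (z.1 / (2 * z.2)))

theorem expNegInvGlue_lt_one (y : ℝ) : expNegInvGlue y < 1 := by
  unfold expNegInvGlue
  split_ifs with h
  · exact one_pos
  · rw [Real.exp_lt_one_iff]
    have : 0 < y⁻¹ := inv_pos.2 (not_le.1 h)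
    linarith

theorem tanhInv_pos (z : ℝ × ℝ) : 0 < tanhInv z := by
  have h1 := expNegInvGlue_lt_one (z.1 / (2 * z.2))
  have h2 := expNegInvGlue.nonneg (z.1 / (2 * z.2))
  exact div_pos (by linarith) (by linarith)

theorem tanhInv_zero (r : ℝ) : tanhInv (0, r) = 1 := by
  simp [tanhInv]

theorem tanhInv_eq {p r : ℝ} (hp : 0 < p) (hr : 0 < r) :
    tanhInv (p, r) = Real.tanh (1 / p * r) := by
  have h1 : expNegInvGlue (p / (2 * r)) = Real.exp (-(1 / p * r)) ^ 2 := by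
    rw [expNegInvGlue, if_neg (by push Not; positivity), ← Real.exp_nat_mul]
    congr 1
    push_cast
    field_simp
  have h2 : Real.exp (-(1 / p * r)) * Real.exp (1 / p * r) = 1 := by
    rw [← Real.exp_add]; simp
  rw [tanhInv, h1, Real.tanh_eq_sinh_div_cosh, Real.sinh_eq, Real.cosh_eq]
  set a := Real.exp (-(1 / p * r))
  set b := Real.exp (1 / p * r)
  have ha : 0 < a := Real.exp_pos _
  have hb : 0 < b := Real.exp_pos _
  rw [div_div_div_cancel_right₀ (by norm_num), div_eq_div_iff (by positivity) (by positivity)]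
  have : a ^ 2 * b = a := by rw [sq, mul_assoc, h2, mul_one]
  linear_combination (-2 : ℝ) * this

theorem contDiffOn_tanhInv : ContDiffOn ℝ (⊤ : ℕ∞) tanhInv (Set.univ ×ˢ Set.Ioi 0) := by
  have h1 : ContDiffOn ℝ (⊤ : ℕ∞) (fun z : ℝ × ℝ => z.1 / (2 * z.2)) (Set.univ ×ˢ Set.Ioi 0) :=
    ContDiffOn.div (ContDiff.contDiffOn (by fun_prop)) (ContDiff.contDiffOn (by fun_prop))
      fun z hz => by
        have : 0 < z.2 := hz.2
        positivity
  have h2 : ContDiffOn ℝ (⊤ : ℕ∞) (fun z : ℝ × ℝ => expNegInvGlue (z.1 / (2 * z.2)))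
      (Set.univ ×ˢ Set.Ioi 0) := expNegInvGlue.contDiff.comp_contDiffOn h1
  refine (contDiffOn_const.sub h2).div (contDiffOn_const.add h2) fun z _ => ?_
  have := expNegInvGlue.nonneg (z.1 / (2 * z.2))
  positivity

/-- The rescaled phase `√(p(1-β+βp²)) m_β(r/p)`, smooth up to `p = 0`. -/
def highPhase (β : ℝ) (z : ℝ × ℝ) : ℝ :=
  √(z.2 * (1 - β + β * (z.1 ^ 2 + z.2 ^ 2)) * tanhInv z)

theorem contDiffOn_highPhase {β : ℝ} (hβ : β = 0 ∨ β = 1) :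
    ContDiffOn ℝ (⊤ : ℕ∞) (highPhase β) (Set.univ ×ˢ Set.Ioi 0) := by
  refine ContDiffOn.sqrt (ContDiffOn.mul (ContDiff.contDiffOn (by fun_prop))
    contDiffOn_tanhInv) fun z hz => ?_
  have h1 : 0 < z.2 := hz.2
  have h2 := tanhInv_pos z
  rcases hβ with rfl | rfl
  · norm_num; constructor <;> positivity
  · norm_num; refine ⟨⟨?_, ?_⟩, ?_⟩ <;> positivity

theorem highPhase_eq {β : ℝ} (hβ : β = 0 ∨ β = 1) {p r : ℝ} (hp : 0 < p) (hr : 0 < r) :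
    highPhase β (p, r) = √(p * (1 - β + β * p ^ 2)) * mSymb β (1 / p * r) := by
  unfold highPhase mSymb
  have h0 : 0 ≤ p * (1 - β + β * p ^ 2) := by
    rcases hβ with rfl | rfl <;> norm_num <;> positivity
  rw [← Real.sqrt_mul h0, tanhInv_eq hp hr]
  congr 1
  rcases hβ with rfl | rfl
  · field_simp; ring
  · field_simp; ring

theorem norm_kernel_high_le (d : ℕ) (hd : 1 ≤ d) {β : ℝ} (hβ : β = 0 ∨ β = 1) {ϱ : ℝ → ℝ}
    (hϱ : ContDiff ℝ (⊤ : ℕ∞) ϱ) (hϱ0 : ∀ r, r ∉ Set.Icc (1 / 2 : ℝ) 2 → ϱ r = 0) :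
    ∃ C, 0 ≤ C ∧ ∀ p ∈ Set.Ioc (0 : ℝ) 1, ∀ t : ℝ, 0 < t → ∀ x : Euc d,
      ‖∫ ξ : Euc d, Complex.exp (Complex.I * ((⟪x, ξ⟫ : ℝ) : ℂ)) *
        (Complex.exp (Complex.I * ((t * mSymb β (1 / p * ‖ξ‖) : ℝ) : ℂ)) * (ϱ ‖ξ‖ : ℂ))‖ ≤
        C / √(t / √(p * (1 - β + β * p ^ 2))) ^ d := by
  obtain ⟨ε, hε⟩ : ∃ ε : ℝ, (β = 0 ∧ ε = -1) ∨ (β = 1 ∧ ε = 1) := by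
    rcases hβ with h | h
    · exact ⟨-1, Or.inl ⟨h, rfl⟩⟩
    · exact ⟨1, Or.inr ⟨h, rfl⟩⟩
  have hβ0 : 0 ≤ β := by rcases hβ with h | h <;> simp [h]
  have hε1 : |ε| = 1 := by rcases hε with h | h <;> simp [h.2]
  have hG := contDiffOn_highPhase hβ
  have hA : ∀ p : ℝ, 0 < p → 0 < √(p * (1 - β + β * p ^ 2)) := by
    intro p hp
    apply Real.sqrt_pos.2
    rcases hβ with rfl | rfl <;> norm_num <;> positivity
  have hder := fun (p : ℝ) (hp : 0 < p) =>
    derivLast_of_eq_mSymb hβ0 hG (one_div_pos.2 hp) fun r hr => highPhase_eq hβ hp hr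
  have hf0 : ∀ r : ℝ, 0 < r → 0 < r * (1 - β + β * r ^ 2) := by
    intro r hr
    rcases hβ with rfl | rfl <;> norm_num <;> positivity
  have hf1 : ∀ r : ℝ, HasDerivAt (fun r => r * (1 - β + β * r ^ 2)) (1 - β + 3 * β * r ^ 2) r :=
    fun r => ((hasDerivAt_id r).mul
      (((hasDerivAt_pow 2 r).const_mul β).const_add (1 - β))).congr_deriv (by simp; ring)
  have hf2 : ∀ r : ℝ, HasDerivAt (fun r => 1 - β + 3 * β * r ^ 2) (6 * β * r) r :=
    fun r => (((hasDerivAt_pow 2 r).const_mul (3 * β)).const_add (1 - β)).congr_deriv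
      (by simp; ring)
  have hsq := fun (r : ℝ) (hr : 0 < r) =>
    hasDerivAt_sqrt_comp (f₂ := fun r => 6 * β * r) (hf1 r) (hf2 r) (hf0 r hr)
  have h01 := derivLast_eq_of_hasDerivAt hG (p := 0)
    (g := fun r => √(r * (1 - β + β * r ^ 2))) (fun r _ => by simp [highPhase, tanhInv_zero])
    (fun r hr => (hsq r hr).1)
  have h02 := derivLast_eq_of_hasDerivAt (contDiffOn_derivLast isOpen_univ_prod_Ioi hG) h01
    (fun r hr => (hsq r hr).2)
  have hG2 : ∀ p ∈ Set.Icc (0 : ℝ) 1, ∀ r ∈ Set.Icc (1 / 4 : ℝ) 4,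
      0 < ε * derivLast (derivLast (highPhase β)) (p, r) := by
    intro p hp r hr
    have hr0 : 0 < r := lt_of_lt_of_le (by norm_num) hr.1
    rcases hp.1.eq_or_lt with h0 | h0
    · rw [← h0, h02 r hr0, ← mul_div_assoc]
      have h1 := hf0 r hr0
      have h2 := Real.sqrt_pos.2 h1
      refine div_pos ?_ (by positivity)
      rcases hε with ⟨rfl, rfl⟩ | ⟨rfl, rfl⟩
      · norm_num
      · have : 0 < r ^ 4 := by positivity
        nlinarith
    · rw [(hder p h0 r hr0).2, mul_left_comm]
      have := hA p h0
      have := mul_mSymb₂_pos hε (mul_pos (one_div_pos.2 h0) hr0)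
      positivity
  obtain ⟨c, hc, hc1⟩ : ∃ c, 0 < c ∧ ∀ p ∈ Set.Icc (0 : ℝ) 1, ∀ r ∈ Set.Icc (1 / 4 : ℝ) 4,
      c ≤ ε * derivLast (derivLast (highPhase β)) (p, r) := by
    have cG2 := contDiffOn_derivLast isOpen_univ_prod_Ioi
      (contDiffOn_derivLast isOpen_univ_prod_Ioi hG)
    obtain ⟨z, hz, hmin⟩ := (isCompact_Icc.prod isCompact_Icc).exists_isMinOn
      (s := Set.Icc (0 : ℝ) 1 ×ˢ Set.Icc (1 / 4 : ℝ) 4) ⟨(0, 1), by norm_num⟩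
      ((continuousOn_const (c := ε)).mul (cG2.continuousOn.mono
        fun z hz => ⟨trivial, lt_of_lt_of_le (by norm_num) hz.2.1⟩))
    exact ⟨_, hG2 z.1 hz.1 z.2 hz.2, fun p hp r hr => hmin ⟨hp, hr⟩⟩
  obtain ⟨C, hC, h⟩ := exists_kernel_bound d hd hϱ hϱ0 hG
    (by
      intro p hp r hr
      have hr0 : 0 < r := lt_of_lt_of_le (by norm_num) hr.1
      rcases hp.1.eq_or_lt with h0 | h0
      · rw [← h0, h01 r hr0]
        have h2 := Real.sqrt_pos.2 (hf0 r hr0)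
        refine div_pos ?_ (by positivity)
        rcases hβ with rfl | rfl
        · norm_num
        · norm_num
          positivity
      · rw [(hder p h0 r hr0).1]
        have := hA p h0
        have := mSymb₁_pos hβ0 (mul_pos (one_div_pos.2 h0) hr0)
        positivity)
    (κ := fun _ => min c 1) hε1 (fun p _ => ⟨lt_min hc one_pos, min_le_right _ _⟩)
    (fun p hp r hr => (min_le_left _ _).trans (hc1 p ⟨hp.1.le, hp.2⟩ r hr))
  refine ⟨C / √(min c 1), by positivity, fun p hp t ht x => ?_⟩
  have hp0 := hp.1
  have hAp := hA p hp0
  have cm := continuous_mSymb β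
  refine (h p hp (t / √(p * (1 - β + β * p ^ 2))) (by positivity)
    (fun r => t * mSymb β (1 / p * r)) (by fun_prop)
    (fun r hr => by
      rw [highPhase_eq hβ hp0 hr, ← mul_assoc, div_mul_cancel₀ _ hAp.ne']) x).trans (le_of_eq ?_)
  rw [div_div]
  congr 1
  ring

/-! ### The dyadic cutoff -/

theorem rho_eq_zero {χ : ℝ → ℝ} (hχ : IsCutoff χ) {r : ℝ} (h0 : 0 ≤ r)
    (hr : r ∉ Set.Icc (1 / 2 : ℝ) 2) : rho χ r = 0 := by
  obtain ⟨-, -, -, h1, hs⟩ := hχ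
  unfold rho
  by_cases h : r < 1 / 2
  · rw [h1 r ⟨by linarith, by linarith⟩, h1 (2 * r) ⟨by linarith, by linarith⟩, sub_self]
  · have h2 : 2 < r := by
      by_contra h2
      exact hr ⟨not_lt.1 h, not_lt.1 h2⟩
    have hz : ∀ s, 2 < s → χ s = 0 := fun s hs' => by
      by_contra hne
      exact absurd (hs hne).2 (not_le.2 hs')
    rw [hz r h2, hz (2 * r) (by linarith), sub_self]

/-- The restriction of `rho χ` to the positive half-line, as a smooth function on `ℝ`. -/
def rhoPos (χ : ℝ → ℝ) (r : ℝ) : ℝ := rho χ r * Real.smoothTransition (4 * r)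

theorem contDiff_rhoPos {χ : ℝ → ℝ} (hχ : IsCutoff χ) : ContDiff ℝ (⊤ : ℕ∞) (rhoPos χ) := by
  have h := hχ.1
  have h2 : ContDiff ℝ (⊤ : ℕ∞) fun r : ℝ => χ (2 * r) := h.comp (by fun_prop)
  have h3 : ContDiff ℝ (⊤ : ℕ∞) fun r : ℝ => Real.smoothTransition (4 * r) :=
    Real.smoothTransition.contDiff.comp (by fun_prop)
  exact (h.sub h2).mul h3

theorem rhoPos_eq_zero {χ : ℝ → ℝ} (hχ : IsCutoff χ) (r : ℝ)
    (hr : r ∉ Set.Icc (1 / 2 : ℝ) 2) : rhoPos χ r = 0 := by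
  unfold rhoPos
  rcases le_total r 0 with h | h
  · rw [Real.smoothTransition.zero_of_nonpos (by linarith), mul_zero]
  · rw [rho_eq_zero hχ h hr, zero_mul]

theorem rhoPos_eq_rho {χ : ℝ → ℝ} (hχ : IsCutoff χ) {r : ℝ} (hr : 0 ≤ r) :
    rhoPos χ r = rho χ r := by
  unfold rhoPos
  by_cases h : r ∈ Set.Icc (1 / 2 : ℝ) 2
  · rw [Real.smoothTransition.one_of_one_le (by linarith [h.1]), mul_one]
  · rw [rho_eq_zero hχ hr h, zero_mul]

/-! ### Comparison with the factor `c_{β,d}(λ)` -/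

theorem sqrt_pow_eq_rpow {a : ℝ} (ha : 0 ≤ a) (d : ℕ) : √a ^ d = a ^ ((d : ℝ) / 2) := by
  rw [Real.sqrt_eq_rpow, ← Real.rpow_natCast, ← Real.rpow_mul ha]
  congr 1; ring

theorem one_le_jap (x : ℝ) : 1 ≤ jap x := by
  unfold jap
  rw [Real.one_le_sqrt]
  nlinarith [sq_nonneg x]

theorem le_jap (x : ℝ) : x ≤ jap x := Real.le_sqrt_of_sq_le (by linarith)

theorem jap_le_two_mul {x y : ℝ} (hx : x ^ 2 ≤ y ^ 2) (hy : 1 ≤ y) : jap x ≤ 2 * y :=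
  Real.sqrt_le_iff.2 ⟨by linarith, by nlinarith⟩

theorem rpow_neg_half_le_jap {x y : ℝ} (hx : x ^ 2 ≤ y ^ 2) (hy : 1 ≤ y) (d : ℕ) :
    (2 * y) ^ (-(d : ℝ) / 2) ≤ jap x ^ (-(d : ℝ) / 2) :=
  Real.rpow_le_rpow_of_nonpos (zero_lt_one.trans_le (one_le_jap x)) (jap_le_two_mul hx hy)
    (by have : (0 : ℝ) ≤ d := Nat.cast_nonneg d
        linarith)

theorem low_factor_le {β l t : ℝ} (hβ : β = 0 ∨ β = 1) (d : ℕ) (hl : 0 < l) (hl1 : l ≤ 1)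
    (ht : 0 < t) :
    l ^ d * (1 / (√(t * l) ^ d * l)) ≤
      2 ^ ((d : ℝ) / 2) * cFactor β d l * t ^ (-(d : ℝ) / 2) := by
  have e : l ^ d * (1 / (√(t * l) ^ d * l)) =
      l ^ ((d : ℝ) / 2 - 1) * t ^ (-(d : ℝ) / 2) := by
    rw [sqrt_pow_eq_rpow (by positivity), Real.mul_rpow ht.le hl.le, neg_div,
      Real.rpow_neg ht.le, Real.rpow_sub_one hl.ne', ← Real.rpow_natCast l d,
      show (d : ℝ) = d / 2 + d / 2 by ring, Real.rpow_add hl, ← show (d : ℝ) = d / 2 + d / 2 by ring]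
    field_simp
  have hb : (√β * l) ^ 2 ≤ 1 ^ 2 := by
    rcases hβ with rfl | rfl
    · simp
    · simpa [abs_of_pos hl] using hl1
  have h1 := rpow_neg_half_le_jap hb le_rfl d
  have h2 : 1 ≤ jap l ^ ((d : ℝ) / 4 + 1) :=
    Real.one_le_rpow (one_le_jap l) (by positivity)
  have h3 : (1 : ℝ) = 2 ^ ((d : ℝ) / 2) * (2 * 1) ^ (-(d : ℝ) / 2) := by
    rw [mul_one, ← Real.rpow_add two_pos, neg_div, add_neg_cancel, Real.rpow_zero]
  rw [e]
  refine mul_le_mul_of_nonneg_right ?_ (by positivity)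
  calc l ^ ((d : ℝ) / 2 - 1)
      = 2 ^ ((d : ℝ) / 2) * (l ^ ((d : ℝ) / 2 - 1) * (2 * 1) ^ (-(d : ℝ) / 2) * 1) := by
        linear_combination l ^ ((d : ℝ) / 2 - 1) * h3
    _ ≤ 2 ^ ((d : ℝ) / 2) * cFactor β d l := by
        have hj0 : 0 ≤ jap (√β * l) := Real.sqrt_nonneg _
        unfold cFactor
        gcongr

theorem high_factor_le {β l t : ℝ} (hβ : β = 0 ∨ β = 1) (d : ℕ) (hl : 1 ≤ l) (ht : 0 < t) :
    l ^ d * (1 / √(t / √(1 / l * (1 - β + β * (1 / l) ^ 2))) ^ d) ≤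
      2 ^ ((d : ℝ) / 2) * cFactor β d l * t ^ (-(d : ℝ) / 2) := by
  have hl0 : 0 < l := by linarith
  have hj : l ^ ((d : ℝ) / 4 + 1) ≤ jap l ^ ((d : ℝ) / 4 + 1) :=
    Real.rpow_le_rpow hl0.le (le_jap l) (by positivity)
  have key : ∀ a y : ℝ, √(1 / l * (1 - β + β * (1 / l) ^ 2)) = l ^ (-a) → 1 ≤ y →
      (√β * l) ^ 2 ≤ y ^ 2 → l ^ ((d : ℝ) / 2 - a * d / 2) = y ^ (-(d : ℝ) / 2) * l ^ ((d : ℝ) / 4) →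
      l ^ d * (1 / √(t / √(1 / l * (1 - β + β * (1 / l) ^ 2))) ^ d) ≤
        2 ^ ((d : ℝ) / 2) * cFactor β d l * t ^ (-(d : ℝ) / 2) := by
    intro a y ha hy hb hly
    have hy0 : 0 < y := by linarith
    have h1 := rpow_neg_half_le_jap hb hy d
    have h3 : (2 : ℝ) ^ ((d : ℝ) / 2) * (2 * y) ^ (-(d : ℝ) / 2) = y ^ (-(d : ℝ) / 2) := by
      rw [Real.mul_rpow two_pos.le hy0.le, ← mul_assoc, ← Real.rpow_add two_pos, neg_div,
        add_neg_cancel, Real.rpow_zero, one_mul]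
    have e : l ^ d * (1 / √(t / l ^ (-a)) ^ d) =
        l ^ ((d : ℝ) / 2) * l ^ ((d : ℝ) / 2 - a * d / 2) * t ^ (-(d : ℝ) / 2) := by
      rw [sqrt_pow_eq_rpow (by positivity), Real.div_rpow ht.le (by positivity), neg_div,
        Real.rpow_neg ht.le, ← Real.rpow_mul hl0.le, one_div_div, ← Real.rpow_natCast l d,
        ← Real.rpow_add hl0, mul_div_assoc', ← Real.rpow_add hl0, ← div_eq_mul_inv]
      congr 2; ring
    have e2 : l ^ ((d : ℝ) / 2) * l ^ ((d : ℝ) / 4) =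
        l ^ ((d : ℝ) / 2 - 1) * l ^ ((d : ℝ) / 4 + 1) := by
      rw [← Real.rpow_add hl0, ← Real.rpow_add hl0]; congr 1; ring
    rw [ha, e]
    refine mul_le_mul_of_nonneg_right ?_ (by positivity)
    calc l ^ ((d : ℝ) / 2) * l ^ ((d : ℝ) / 2 - a * d / 2)
        = 2 ^ ((d : ℝ) / 2) * (l ^ ((d : ℝ) / 2 - 1) * (2 * y) ^ (-(d : ℝ) / 2) *
            l ^ ((d : ℝ) / 4 + 1)) := by
          rw [hly]
          linear_combination y ^ (-(d : ℝ) / 2) * e2 -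
            l ^ ((d : ℝ) / 2 - 1) * l ^ ((d : ℝ) / 4 + 1) * h3
      _ ≤ 2 ^ ((d : ℝ) / 2) * cFactor β d l := by
          have hj0 : 0 ≤ jap (√β * l) := Real.sqrt_nonneg _
          unfold cFactor
          gcongr
  rcases hβ with rfl | rfl
  · refine key (1 / 2) 1 ?_ le_rfl (by simp) ?_
    · rw [Real.rpow_neg hl0.le, ← Real.sqrt_eq_rpow, ← Real.sqrt_inv]
      congr 1; ring
    · rw [Real.one_rpow, one_mul]
      congr 1; ring
  · refine key (3 / 2) l ?_ hl (by simp) ?_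
    · rw [Real.sqrt_eq_rpow, show 1 / l * (1 - 1 + 1 * (1 / l) ^ 2) = l ^ (-3 : ℝ) by
        rw [Real.rpow_neg hl0.le, sub_self, zero_add, one_mul, ← pow_succ', one_div, inv_pow]
        norm_cast, ← Real.rpow_mul hl0.le]
      congr 1; ring
    · rw [← Real.rpow_add hl0]
      congr 1; ring

/-- The bound `sup_x |I_λ(x,t)| ≲ c_{β,d}(λ) t^{-d/2}` for the oscillatory integral
`I_λ(x,t) = λ^d ∫ e^{iλx·ξ + it m_β(λ|ξ|)} ρ(|ξ|) dξ`, uniformly in `λ = 2^n`, `x` and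
`t > 0`. -/
theorem oscillatory_kernel_bound
    (β : ℝ) (hβ : β = 0 ∨ β = 1) (d : ℕ) (hd : 1 ≤ d)
    (χ : ℝ → ℝ) (hχ : IsCutoff χ) :
    ∃ C > 0, ∀ (n : ℤ) (t : ℝ), 0 < t → ∀ x : Euc d,
      ‖((((2 : ℝ) ^ n) ^ d : ℝ) : ℂ) *
          ∫ ξ : Euc d, Complex.exp (Complex.I *
              (((2 : ℝ) ^ n * ⟪x, ξ⟫ + t * mSymb β ((2 : ℝ) ^ n * ‖ξ‖) : ℝ) : ℂ)) *
            (rho χ ‖ξ‖ : ℂ)‖ ≤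
        C * cFactor β d ((2 : ℝ) ^ n) * t ^ (-(d : ℝ) / 2) := by
  obtain ⟨C₁, hC₁, hlow⟩ :=
    norm_kernel_low_le d hd hβ (contDiff_rhoPos hχ) (rhoPos_eq_zero hχ)
  obtain ⟨C₂, hC₂, hhigh⟩ :=
    norm_kernel_high_le d hd hβ (contDiff_rhoPos hχ) (rhoPos_eq_zero hχ)
  refine ⟨(C₁ + C₂ + 1) * 2 ^ ((d : ℝ) / 2), by positivity, fun n t ht x => ?_⟩
  have hl : (0 : ℝ) < 2 ^ n := by positivity
  generalize (2 : ℝ) ^ n = l at hl ⊢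
  have hint : ∫ ξ : Euc d, Complex.exp (Complex.I *
        ((l * ⟪x, ξ⟫ + t * mSymb β (l * ‖ξ‖) : ℝ) : ℂ)) * (rho χ ‖ξ‖ : ℂ) =
      ∫ ξ : Euc d, Complex.exp (Complex.I * ((⟪l • x, ξ⟫ : ℝ) : ℂ)) *
        (Complex.exp (Complex.I * ((t * mSymb β (l * ‖ξ‖) : ℝ) : ℂ)) * (rhoPos χ ‖ξ‖ : ℂ)) := by
    congr 1
    funext ξ
    rw [rhoPos_eq_rho hχ (norm_nonneg ξ), real_inner_smul_left, ← mul_assoc, ← Complex.exp_add,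
      ← mul_add, ← Complex.ofReal_add]
  have hfac : ∀ {K b : ℝ}, 0 ≤ b → K ≤ C₁ + C₂ + 1 →
      l ^ d * b ≤ 2 ^ ((d : ℝ) / 2) * cFactor β d l * t ^ (-(d : ℝ) / 2) →
      l ^ d * (K * b) ≤
        (C₁ + C₂ + 1) * 2 ^ ((d : ℝ) / 2) * cFactor β d l * t ^ (-(d : ℝ) / 2) := by
    intro K b hb hK h
    calc l ^ d * (K * b) = K * (l ^ d * b) := by ring
      _ ≤ (C₁ + C₂ + 1) * (2 ^ ((d : ℝ) / 2) * cFactor β d l * t ^ (-(d : ℝ) / 2)) :=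
        mul_le_mul hK h (by positivity) (by positivity)
      _ = _ := by ring
  rw [hint, norm_mul, Complex.norm_of_nonneg (by positivity)]
  rcases le_total l 1 with h1 | h1
  · refine (mul_le_mul_of_nonneg_left (hlow l ⟨hl, h1⟩ t ht (l • x)) (by positivity)).trans ?_
    rw [div_eq_mul_one_div]
    exact hfac (by positivity) (by linarith) (low_factor_le hβ d hl h1 ht)
  · have h := hhigh (1 / l) ⟨by positivity, (div_le_one hl).2 h1⟩ t ht (l • x)
    simp only [one_div_one_div] at h
    refine (mul_le_mul_of_nonneg_left h (by positivity)).trans ?_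
    rw [div_eq_mul_one_div]
    exact hfac (by positivity) (by linarith) (high_factor_le hβ d h1 ht)
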